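/- There is an algorithm (computable function) that, given a 3CM M, an instance I over the signature of R_M, and a Boolean conjunctive query q, decides whether ⟨R_M, I⟩ ⊨ q; i.e., BCQ entailment is decidable for the concrete class C = {R_M : M a 3CM}. -/

import Mathlib

set_option maxHeartbeats 1000000
set_option synthInstance.maxHeartbeats 1000000
set_option synthInstance.maxSize 512

attribute [local instance] Classical.propDecidable

noncomputable section

/-! ### Terms and atoms -/

/-- Variables: ordinary variables `Sum.inl n`, or fresh variables `Sum.inr (c, k)`
introduced by the trigger with code `c` for the head variable with code `k`. -/
abbrev Var : Type := ℕ ⊕ (ℕ × ℕ)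

/-- Terms: constants `Sum.inl c` or variables `Sum.inr v`. -/
abbrev FTerm : Type := ℕ ⊕ Var

def ct (n : ℕ) : FTerm := Sum.inl n
def vt (n : ℕ) : FTerm := Sum.inr (Sum.inl n)

/-- An atom: a predicate name together with its list of arguments. -/
abbrev Atom : Type := ℕ × List FTerm

/-- Active domain: all terms occurring in an atom set. -/
def adom (J : Set Atom) : Set FTerm := {t | ∃ a ∈ J, t ∈ a.2}

def atomVarsF (a : Atom) : Finset Var := (a.2.filterMap Sum.getRight?).toFinset

def varsF (A : Finset Atom) : Finset Var := A.biUnion atomVarsF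

def setVars (J : Set Atom) : Set Var := {v | ∃ a ∈ J, Sum.inr v ∈ a.2}

/-! ### Substitutions and homomorphisms -/

abbrev Subst := Var → FTerm

def applyT (σ : Subst) : FTerm → FTerm
  | Sum.inl c => Sum.inl c
  | Sum.inr v => σ v

def applyA (σ : Subst) (a : Atom) : Atom := (a.1, a.2.map (applyT σ))

def IsHomOn (σ : Subst) (A B : Set Atom) : Prop := ∀ a ∈ A, applyA σ a ∈ B

def HomBetween (A B : Set Atom) : Prop := ∃ σ : Subst, IsHomOn σ A B

def IsRetraction (σ : Subst) (A B : Set Atom) : Prop :=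
  IsHomOn σ A B ∧ ∀ v ∈ setVars A ∩ setVars B, σ v = Sum.inr v

/-- Isomorphism of atom sets: a pair of mutually inverse homomorphisms. -/
def Isomorphic (A B : Set Atom) : Prop :=
  ∃ σ τ : Subst, IsHomOn σ A B ∧ IsHomOn τ B A ∧
    (∀ a ∈ A, applyA τ (applyA σ a) = a) ∧ (∀ b ∈ B, applyA σ (applyA τ b) = b)

/-! ### Rules -/

/-- A rule is a pair (body, head). Its existential variables are the head variables
not occurring in the body; its frontier the variables shared by body and head.
A rule is Datalog when every head variable occurs in the body. -/
abbrev Rule : Type := Finset Atom × Finset Atom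

def frontierOf (R : Rule) : Finset Var := varsF R.1 ∩ varsF R.2

def DatRules (Rset : Finset Rule) : Finset Rule := Rset.filter fun R => varsF R.2 ⊆ varsF R.1
def NDatRules (Rset : Finset Rule) : Finset Rule := Rset.filter fun R => ¬ varsF R.2 ⊆ varsF R.1

/-- Satisfaction of a rule in an atom set. -/
def SatisfiesRule (J : Set Atom) (R : Rule) : Prop :=
  ∀ σ : Subst, IsHomOn σ (R.1 : Set Atom) J →
    ∃ σ' : Subst, (∀ v ∈ varsF R.1, σ' v = σ v) ∧ IsHomOn σ' (R.2 : Set Atom) J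

def IsModel (Rset : Finset Rule) (I J : Set Atom) : Prop :=
  (∀ R ∈ Rset, SatisfiesRule J R) ∧ HomBetween I J

/-- BCQ entailment: every model of the KB satisfies the query. -/
def Entails (Rset : Finset Rule) (I q : Set Atom) : Prop :=
  ∀ J : Set Atom, IsModel Rset I J → HomBetween q J

def IsUniversalModel (Rset : Finset Rule) (I U : Set Atom) : Prop :=
  IsModel Rset I U ∧ ∀ J : Set Atom, IsModel Rset I J → HomBetween U J

/-! ### Triggers -/

structure Trigger where
  rule : Rule
  sub : Subst

/-- Injective code of a trigger (a trigger is determined by its rule and the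
restriction of its substitution to the body variables). -/
def Trigger.code (t : Trigger) : ℕ :=
  Encodable.encode (t.rule, (varsF t.rule.1).image fun v => (v, t.sub v))

/-- The canonical extension of the trigger substitution, mapping each existential
variable `z` to the fresh variable unique for `z` and the trigger. -/
def Trigger.extSub (t : Trigger) : Subst := fun v =>
  if v ∈ varsF t.rule.1 then t.sub v
  else Sum.inr (Sum.inr (t.code, Encodable.encode v))

def Trigger.out (t : Trigger) : Finset Atom := t.rule.2.image (applyA t.extSub)

def Trigger.isOn (t : Trigger) (J : Set Atom) : Prop := IsHomOn t.sub (t.rule.1 : Set Atom) J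

/-! ### Chase variants, derivations, chase termination classes -/

inductive ChaseVariant : Type
  | O | SO | R | E
deriving DecidableEq

def Applicable : ChaseVariant → Trigger → Set Atom → Prop
  | .O, t, J => ¬ ((t.out : Set Atom) ⊆ J)
  | .SO, t, J => ∀ t' : Trigger, t'.rule = t.rule → t'.isOn J →
      (∀ v ∈ frontierOf t.rule, t'.sub v = t.sub v) → ¬ ((t'.out : Set Atom) ⊆ J)
  | .R, t, J => ¬ ∃ σ : Subst, IsRetraction σ (J ∪ (t.out : Set Atom)) J
  | .E, t, J => ¬ ∃ σ : Subst, IsHomOn σ (J ∪ (t.out : Set Atom)) J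

def instSeq (I : Set Atom) (steps : ℕ → Option Trigger) : ℕ → Set Atom
  | 0 => I
  | n + 1 => instSeq I steps n ∪
      (match steps n with
        | none => (∅ : Set Atom)
        | some t => (t.out : Set Atom))

/-- A (possibly infinite) derivation from the knowledge base `⟨Rset, I⟩`. -/
structure Deriv (Rset : Finset Rule) (I : Set Atom) where
  steps : ℕ → Option Trigger
  prefix_closed : ∀ n, steps n = none → steps (n + 1) = none
  valid : ∀ n t, steps n = some t →
    t.rule ∈ Rset ∧ t.isOn (instSeq I steps n) ∧ ¬ ((t.out : Set Atom) ⊆ instSeq I steps n)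

def Deriv.inst {Rset : Finset Rule} {I : Set Atom} (D : Deriv Rset I) (n : ℕ) :
    Set Atom := instSeq I D.steps n

def Deriv.res {Rset : Finset Rule} {I : Set Atom} (D : Deriv Rset I) : Set Atom :=
  ⋃ n, D.inst n

def Deriv.Finite {Rset : Finset Rule} {I : Set Atom} (D : Deriv Rset I) : Prop :=
  ∃ n, D.steps n = none

def Deriv.IsX {Rset : Finset Rule} {I : Set Atom} (X : ChaseVariant)
    (D : Deriv Rset I) : Prop :=
  ∀ n t, D.steps n = some t → Applicable X t (D.inst n)

def Deriv.Fair {Rset : Finset Rule} {I : Set Atom} (X : ChaseVariant)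
    (D : Deriv Rset I) : Prop :=
  ∀ i, ∀ t : Trigger, t.rule ∈ Rset → t.isOn (D.inst i) → Applicable X t (D.inst i) →
    ∃ j, i < j ∧ ¬ Applicable X t (D.inst j)

/-- All-instance, all-derivation chase termination. -/
def CTall (X : ChaseVariant) (Rset : Finset Rule) : Prop :=
  ∀ I : Finset Atom, ∀ D : Deriv Rset (I : Set Atom), D.IsX X → D.Fair X → D.Finite

/-- All-instance, some-derivation chase termination. -/
def CTex (X : ChaseVariant) (Rset : Finset Rule) : Prop :=
  ∀ I : Finset Atom, ∃ D : Deriv Rset (I : Set Atom), D.IsX X ∧ D.Fair X ∧ D.Finite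

inductive CTQuant : Type
  | all | ex

def CT (X : ChaseVariant) : CTQuant → Finset Rule → Prop
  | .all => CTall X
  | .ex => CTex X

/-- The result of some fair `X`-derivation from `⟨Rset, J⟩`. -/
def ChX (X : ChaseVariant) (Rset : Finset Rule) (J : Set Atom) : Set Atom :=
  if h : ∃ D : Deriv Rset J, D.IsX X ∧ D.Fair X then h.choose.res else J

/-! ### Gaifman graph, treewidth, bts -/

def gaifmanAdj (J : Set Atom) (u v : FTerm) : Prop :=
  u ≠ v ∧ ∃ a ∈ J, u ∈ a.2 ∧ v ∈ a.2

/-- The (Gaifman graph of the) atom set `J` has treewidth at most `k`: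
there is a tree decomposition all of whose bags have size at most `k + 1`. -/
def TreewidthAtMost (J : Set Atom) (k : ℕ) : Prop :=
  ∃ (ι : Type) (T : SimpleGraph ι) (bag : ι → Finset FTerm),
    T.Connected ∧ T.IsAcyclic ∧
    (∀ v ∈ adom J, ∃ i, v ∈ bag i) ∧
    (∀ u v : FTerm, gaifmanAdj J u v → ∃ i, u ∈ bag i ∧ v ∈ bag i) ∧
    (∀ v : FTerm, (SimpleGraph.induce {i | v ∈ bag i} T).Preconnected) ∧
    (∀ i, (bag i).card ≤ k + 1)

/-- Bounded-treewidth sets: for every instance, some universal model of bounded treewidth. -/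
def IsBts (Rset : Finset Rule) : Prop :=
  ∀ I : Finset Atom, ∃ (k : ℕ) (U : Set Atom),
    IsUniversalModel Rset (I : Set Atom) U ∧ TreewidthAtMost U k

/-! ### Three-counter machines -/

/-- A three-counter machine: states `0, …, m − 1` (state `0` is initial, standing for `q₁`),
and a partial transition function given by a finite table. -/
structure TCM where
  m : ℕ
  hm : 0 < m
  δ : List ((ℕ × Bool × Bool) × (ℕ × Int × Int))
  keys_nodup : (δ.map Prod.fst).Nodup
  wf : ∀ e ∈ δ, e.1.1 < m ∧ e.2.1 < m ∧ e.2.2.1.natAbs ≤ 1 ∧ e.2.2.2.natAbs ≤ 1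

/-- A configuration: state, two counters, and the time counter. -/
abbrev Config : Type := ℕ × ℕ × ℕ × ℕ

def TCM.step (M : TCM) (q : ℕ) (b1 b2 : Bool) : Option (ℕ × Int × Int) :=
  (M.δ.find? fun e => decide (e.1 = (q, b1, b2))).map Prod.snd

def TCM.next (M : TCM) (C : Config) : Option Config :=
  match M.step C.1 (decide (C.2.1 ≠ 0)) (decide (C.2.2.1 ≠ 0)) with
  | none => none
  | some (q', d1, d2) =>
      some (q', ((C.2.1 : ℤ) + d1).toNat, ((C.2.2.1 : ℤ) + d2).toNat, C.2.2.2 + 1)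

def TCM.run (M : TCM) : ℕ → Option Config
  | 0 => some (0, 0, 0, 0)
  | n + 1 => (M.run n).bind M.next

/-- The machine halts: some reachable configuration has no successor. -/
def TCM.Halts (M : TCM) : Prop := ∃ n C, M.run n = some C ∧ M.next C = none

/-! ### Prime encoding of configurations -/

/-- The least prime strictly greater than `n` (computably). -/
def nextPrime (n : ℕ) : ℕ := Nat.find (Nat.exists_infinite_primes (n + 1))

/-- `prm i` is the `(i+1)`-st prime `p_{i+1}`, i.e. `prm 0 = 2`. -/
def prm : ℕ → ℕ
  | 0 => 2
  | k + 1 => nextPrime (prm k)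

/-- Encoding of a configuration as a natural number. -/
def TCM.enc (M : TCM) (C : Config) : ℕ :=
  prm C.1 * prm M.m ^ C.2.1 * prm (M.m + 1) ^ C.2.2.1 * prm (M.m + 2) ^ C.2.2.2

/-- `p = p₁ ⋯ p_{m+3}`. -/
def TCM.p (M : TCM) : ℕ := ∏ i ∈ Finset.range (M.m + 3), prm i

/-- Decode the state from a residue modulo `M.p`. -/
def TCM.stateOf (M : TCM) (i : ℕ) : Option ℕ :=
  (List.range M.m).find? fun s => decide (prm s ∣ i)

/-- The canonical pair `(q_i, r_i)` realizing the prime encoding of the transitions. -/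
def TCM.qr (M : TCM) (i : ℕ) : ℕ × ℕ :=
  match M.stateOf i with
  | none => (1, 1)
  | some s =>
      let b1 : Bool := decide (prm M.m ∣ i)
      let b2 : Bool := decide (prm (M.m + 1) ∣ i)
      match M.step s b1 b2 with
      | none => (1, 1)
      | some (s', d1, d2) =>
          let e1 : ℤ := if b1 then d1 else max d1 0
          let e2 : ℤ := if b2 then d2 else max d2 0
          let num : ℕ := prm s' * prm (M.m + 2) *
            (if e1 = 1 then prm M.m else 1) * (if e2 = 1 then prm (M.m + 1) else 1)
          let den : ℕ := prm s *
            (if e1 = -1 then prm M.m else 1) * (if e2 = -1 then prm (M.m + 1) else 1)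
          (num / Nat.gcd num den, den / Nat.gcd num den)

def TCM.qi (M : TCM) (i : ℕ) : ℕ := (M.qr i).1
def TCM.ri (M : TCM) (i : ℕ) : ℕ := (M.qr i).2

/-- `g(n) = q_{n mod p} · n / r_{n mod p}`. -/
def TCM.g (M : TCM) (n : ℕ) : ℕ := M.qi (n % M.p) * n / M.ri (n % M.p)

/-- `gᵏ(2)`. -/
def TCM.gIter (M : TCM) (k : ℕ) : ℕ := (M.g)^[k] 2

/-- `G = {gᵏ(2) : k ∈ ℕ}`. -/
def TCM.Gset (M : TCM) : Set ℕ := Set.range M.gIter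

/-! ### The rule set `R_M` -/

def pEnd : ℕ := 0
def pFlood : ℕ := 1
def pS0 : ℕ := 2
def pS : ℕ := 3
def pG : ℕ := 4
def pR (i : ℕ) : ℕ := 5 + 2 * i
def pT (i : ℕ) : ℕ := 6 + 2 * i

/-- `j`-th vertex of an `S`-path of length `n` from variable `a` to variable `b`
with fresh intermediate variables `base + 1, …, base + n − 1`. -/
def pathVar (a b base n j : ℕ) : FTerm :=
  if j = 0 then vt a else if j = n then vt b else vt (base + j)

/-- The atoms of `Sⁿ(x_a, x_b)`: an `S`-path of length `n`. -/
def spath (a b base n : ℕ) : Finset Atom :=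
  (Finset.range n).image fun j =>
    (pS, [pathVar a b base n j, pathVar a b base n (j + 1)])

/-- Rule (1): `S₀(x,y) → S(x,y)`. -/
def ruleS : Rule := ({(pS0, [vt 0, vt 1])}, {(pS, [vt 0, vt 1])})

/-- Rule (2): `R_i(x,y) ∧ S(y,z) → R_{i+1}(x,z)` (indices modulo `p`). -/
def ruleR (M : TCM) (i : ℕ) : Rule :=
  ({(pR i, [vt 0, vt 1]), (pS, [vt 1, vt 2])}, {(pR ((i + 1) % M.p), [vt 0, vt 2])})

/-- Rule (3): `T_i(x,y,z) ∧ S^{r_i}(y,y′) ∧ S^{q_i}(z,z′) → T_i(x,y′,z′)`. -/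
def ruleT (M : TCM) (i : ℕ) : Rule :=
  (({(pT i, [vt 0, vt 1, vt 2])} : Finset Atom) ∪ spath 1 3 10 (M.ri i) ∪
      spath 2 4 (11 + M.ri i) (M.qi i),
    {(pT i, [vt 0, vt 3, vt 4])})

/-- Rule (4): `S(x,y) → Flood(y)`. -/
def ruleFloodProp : Rule := ({(pS, [vt 0, vt 1])}, {(pFlood, [vt 1])})

/-- Rule (5): `End(x) → S(x,x)`. -/
def ruleSEnd : Rule := ({(pEnd, [vt 0])}, {(pS, [vt 0, vt 0])})

/-- Rule (6): `S²(x,y) → G(x,y)`. -/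
def ruleGInit : Rule := (spath 0 1 10 2, {(pG, [vt 0, vt 1])})

/-- Rule (7): `G(x,y) ∧ R_i(x,y) ∧ T_i(x,y,z) → G(x,z)`. -/
def ruleGStep (i : ℕ) : Rule :=
  ({(pG, [vt 0, vt 1]), (pR i, [vt 0, vt 1]), (pT i, [vt 0, vt 1, vt 2])},
    {(pG, [vt 0, vt 2])})

/-- Rule (8): `Flood(x) ∧ Flood(y) ∧ Flood(z) → G(x,y) ∧ ⋀_{j<p} (R_j(x,y) ∧ T_j(x,y,z))`. -/
def ruleFloodGen (M : TCM) : Rule :=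
  ({(pFlood, [vt 0]), (pFlood, [vt 1]), (pFlood, [vt 2])},
    ({(pG, [vt 0, vt 1])} : Finset Atom) ∪
      (Finset.range M.p).biUnion fun j =>
        {(pR j, [vt 0, vt 1]), (pT j, [vt 0, vt 1, vt 2])})

/-- Rule (9): `G(y,z) ∧ End(z) → ∃x (S₀(x,y) ∧ R₀(x,x) ∧ ⋀_{j<p} T_j(x,x,x))`. -/
def ruleEx (M : TCM) : Rule :=
  ({(pG, [vt 1, vt 2]), (pEnd, [vt 2])},
    ({(pS0, [vt 0, vt 1]), (pR 0, [vt 0, vt 0])} : Finset Atom) ∪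
      (Finset.range M.p).biUnion fun j => {(pT j, [vt 0, vt 0, vt 0])})

/-- The rule set `R_M`. -/
def RM (M : TCM) : Finset Rule :=
  ({ruleS, ruleFloodProp, ruleSEnd, ruleGInit, ruleFloodGen M, ruleEx M} : Finset Rule) ∪
    (Finset.range M.p).biUnion fun i => {ruleR M i, ruleT M i, ruleGStep i}

/-- The alternating Datalog/non-Datalog chase steps `Step^X_n`. -/
def StepX (X : ChaseVariant) (M : TCM) : ℕ → Set Atom → Set Atom
  | 0, I => ChX X (DatRules (RM M)) I
  | n + 1, I => ChX X (DatRules (RM M)) (ChX X (NDatRules (RM M)) (StepX X M n I))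

/-- The constant `w`, the "well of positivity". -/
def wC : FTerm := ct 0

/-- The instance `{End(w)}`. -/
def IE : Set Atom := {(pEnd, [wC])}

/-- Membership in the signature of `R_M` (predicate together with its arity). -/
def InSig (M : TCM) (a : Atom) : Prop :=
  ((a.1 = pEnd ∨ a.1 = pFlood) ∧ a.2.length = 1) ∨
  ((a.1 = pS0 ∨ a.1 = pS ∨ a.1 = pG ∨ ∃ i < M.p, a.1 = pR i) ∧ a.2.length = 2) ∨
  ((∃ i < M.p, a.1 = pT i) ∧ a.2.length = 3)

/-- The critical instance: all atoms `P(w, …, w)` over the signature of `R_M`. -/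
def Crit (M : TCM) : Set Atom := {a | InSig M a ∧ ∀ t ∈ a.2, t = wC}

/-- An `S`-path of length `k` from `s` to `t` in `J`. -/
def SPath (J : Set Atom) : ℕ → FTerm → FTerm → Prop
  | 0, s, t => s = t
  | k + 1, s, t => ∃ u, (pS, [s, u]) ∈ J ∧ SPath J k u t

/-- The restriction `J|_S`: atoms of `J` all of whose terms belong to `S`. -/
def restrictTo (J : Set Atom) (S : Set FTerm) : Set Atom := {a ∈ J | ∀ t ∈ a.2, t ∈ S}

/-- An explicit injective encoding of three-counter machines by natural numbers. -/
def encodeTCM (M : TCM) : ℕ := Encodable.encode (M.m, M.δ)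


/-! ### Numeric structures -/

/-- Numeric code of a term. -/
def tc (t : FTerm) : ℕ := Encodable.encode t

/-- Evaluation of terms under a numeric assignment. -/
def ev (s : Var → ℕ) : FTerm → ℕ
  | Sum.inl c => tc (Sum.inl c)
  | Sum.inr v => s v

/-- The (possibly restricted) canonical chase on numbers: the witness for `y` is `y + K`. -/
inductive Ch (M : TCM) (I : Finset Atom) (K : ℕ) (L : ℕ → Prop) : ℕ → List ℕ → Prop
  | facts (a : Atom) (h : a ∈ I) : Ch M I K L a.1 (a.2.map tc)
  | s {x y : ℕ} : Ch M I K L pS0 [x, y] → Ch M I K L pS [x, y]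
  | r {i x y z : ℕ} : i < M.p → Ch M I K L (pR i) [x, y] → Ch M I K L pS [y, z] →
      Ch M I K L (pR ((i + 1) % M.p)) [x, z]
  | t {i x : ℕ} {f g : ℕ → ℕ} : i < M.p → Ch M I K L (pT i) [x, f 0, g 0] →
      (∀ j < M.ri i, Ch M I K L pS [f j, f (j + 1)]) →
      (∀ j < M.qi i, Ch M I K L pS [g j, g (j + 1)]) →
      Ch M I K L (pT i) [x, f (M.ri i), g (M.qi i)]
  | flood {x y : ℕ} : Ch M I K L pS [x, y] → Ch M I K L pFlood [y]
  | send {x : ℕ} : Ch M I K L pEnd [x] → Ch M I K L pS [x, x]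
  | ginit {x y z : ℕ} : Ch M I K L pS [x, y] → Ch M I K L pS [y, z] → Ch M I K L pG [x, z]
  | gstep {i x y z : ℕ} : i < M.p → Ch M I K L pG [x, y] → Ch M I K L (pR i) [x, y] →
      Ch M I K L (pT i) [x, y, z] → Ch M I K L pG [x, z]
  | fg {x y : ℕ} : Ch M I K L pFlood [x] → Ch M I K L pFlood [y] → Ch M I K L pG [x, y]
  | fr {i x y : ℕ} : i < M.p → Ch M I K L pFlood [x] → Ch M I K L pFlood [y] →
      Ch M I K L (pR i) [x, y]
  | ft {i x y z : ℕ} : i < M.p → Ch M I K L pFlood [x] → Ch M I K L pFlood [y] →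
      Ch M I K L pFlood [z] → Ch M I K L (pT i) [x, y, z]
  | exS {y z : ℕ} : L y → Ch M I K L pG [y, z] → Ch M I K L pEnd [z] → Ch M I K L pS0 [y + K, y]
  | exR {y z : ℕ} : L y → Ch M I K L pG [y, z] → Ch M I K L pEnd [z] →
      Ch M I K L (pR 0) [y + K, y + K]
  | exT {i y z : ℕ} : i < M.p → L y → Ch M I K L pG [y, z] → Ch M I K L pEnd [z] →
      Ch M I K L (pT i) [y + K, y + K, y + K]

/-- Closure of a relation under the rules, relative to a domain `D`. -/
structure HC (M : TCM) (I : Finset Atom) (K : ℕ) (D L : ℕ → Prop) (A : ℕ → List ℕ → Prop) :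
    Prop where
  facts : ∀ a ∈ I, A a.1 (a.2.map tc)
  s : ∀ {x y}, D x → D y → A pS0 [x, y] → A pS [x, y]
  r : ∀ {i x y z}, i < M.p → D x → D y → D z → A (pR i) [x, y] → A pS [y, z] →
      A (pR ((i + 1) % M.p)) [x, z]
  t : ∀ {i x} {f g : ℕ → ℕ}, i < M.p → D x → (∀ j ≤ M.ri i, D (f j)) → (∀ j ≤ M.qi i, D (g j)) →
      A (pT i) [x, f 0, g 0] →
      (∀ j < M.ri i, A pS [f j, f (j + 1)]) →
      (∀ j < M.qi i, A pS [g j, g (j + 1)]) →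
      A (pT i) [x, f (M.ri i), g (M.qi i)]
  flood : ∀ {x y}, D x → D y → A pS [x, y] → A pFlood [y]
  send : ∀ {x}, D x → A pEnd [x] → A pS [x, x]
  ginit : ∀ {x y z}, D x → D y → D z → A pS [x, y] → A pS [y, z] → A pG [x, z]
  gstep : ∀ {i x y z}, i < M.p → D x → D y → D z → A pG [x, y] → A (pR i) [x, y] →
      A (pT i) [x, y, z] → A pG [x, z]
  fg : ∀ {x y}, D x → D y → A pFlood [x] → A pFlood [y] → A pG [x, y]
  fr : ∀ {i x y}, i < M.p → D x → D y → A pFlood [x] → A pFlood [y] → A (pR i) [x, y]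
  ft : ∀ {i x y z}, i < M.p → D x → D y → D z → A pFlood [x] → A pFlood [y] →
      A pFlood [z] → A (pT i) [x, y, z]
  exS : ∀ {y z}, L y → D y → D z → D (y + K) → A pG [y, z] → A pEnd [z] → A pS0 [y + K, y]
  exR : ∀ {y z}, L y → D y → D z → D (y + K) → A pG [y, z] → A pEnd [z] →
      A (pR 0) [y + K, y + K]
  exT : ∀ {i y z}, i < M.p → L y → D y → D z → D (y + K) → A pG [y, z] → A pEnd [z] →
      A (pT i) [y + K, y + K, y + K]

theorem Ch.sub {M : TCM} {I : Finset Atom} {K : ℕ} {D L : ℕ → Prop} {A : ℕ → List ℕ → Prop}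
    (H : HC M I K D L A) (hI : ∀ a ∈ I, ∀ t ∈ a.2, D (tc t))
    (hL : ∀ y, L y → D y → D (y + K)) {P : ℕ} {l : List ℕ} (h : Ch M I K L P l) :
    (∀ n ∈ l, D n) ∧ A P l := by
  induction h with
  | facts a h => 
    refine ⟨fun n hn => ?_, H.facts a h⟩
    obtain ⟨t, ht, rfl⟩ := List.mem_map.1 hn
    exact hI a h t ht
  | s _ ih => simp at ih ⊢; exact ⟨ih.1, H.s ih.1.1 ih.1.2 ih.2⟩
  | r hi _ _ ih1 ih2 =>
    simp at ih1 ih2 ⊢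
    exact ⟨⟨ih1.1.1, ih2.1.2⟩, H.r hi ih1.1.1 ih1.1.2 ih2.1.2 ih1.2 ih2.2⟩
  | @t i x f g hi _ _ _ ih1 ih2 ih3 =>
    simp at ih1 ih2 ih3 ⊢
    have hf : ∀ j ≤ M.ri i, D (f j) := by
      intro j hj
      rcases j with _ | j
      · exact ih1.1.2.1
      · exact (ih2 j hj).1.2
    have hg : ∀ j ≤ M.qi i, D (g j) := by
      intro j hj
      rcases j with _ | j
      · exact ih1.1.2.2
      · exact (ih3 j hj).1.2
    exact ⟨⟨ih1.1.1, hf _ le_rfl, hg _ le_rfl⟩,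
      H.t hi ih1.1.1 hf hg ih1.2 (fun j hj => (ih2 j hj).2) (fun j hj => (ih3 j hj).2)⟩
  | flood _ ih => simp at ih ⊢; exact ⟨ih.1.2, H.flood ih.1.1 ih.1.2 ih.2⟩
  | send _ ih => simp at ih ⊢; exact ⟨ih.1, H.send ih.1 ih.2⟩
  | ginit _ _ ih1 ih2 =>
    simp at ih1 ih2 ⊢
    exact ⟨⟨ih1.1.1, ih2.1.2⟩, H.ginit ih1.1.1 ih1.1.2 ih2.1.2 ih1.2 ih2.2⟩
  | gstep hi _ _ _ ih1 ih2 ih3 =>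
    simp at ih1 ih2 ih3 ⊢
    exact ⟨⟨ih1.1.1, ih3.1.2.2⟩, H.gstep hi ih1.1.1 ih1.1.2 ih3.1.2.2 ih1.2 ih2.2 ih3.2⟩
  | fg _ _ ih1 ih2 => simp at ih1 ih2 ⊢; exact ⟨⟨ih1.1, ih2.1⟩, H.fg ih1.1 ih2.1 ih1.2 ih2.2⟩
  | fr hi _ _ ih1 ih2 =>
    simp at ih1 ih2 ⊢; exact ⟨⟨ih1.1, ih2.1⟩, H.fr hi ih1.1 ih2.1 ih1.2 ih2.2⟩
  | ft hi _ _ _ ih1 ih2 ih3 =>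
    simp at ih1 ih2 ih3 ⊢
    exact ⟨⟨ih1.1, ih2.1, ih3.1⟩, H.ft hi ih1.1 ih2.1 ih3.1 ih1.2 ih2.2 ih3.2⟩
  | @exS y z hy _ _ ih1 ih2 =>
    simp at ih1 ih2 ⊢
    have := hL y hy ih1.1.1
    exact ⟨⟨this, ih1.1.1⟩, H.exS hy ih1.1.1 ih2.1 this ih1.2 ih2.2⟩
  | @exR y z hy _ _ ih1 ih2 =>
    simp at ih1 ih2 ⊢
    have := hL y hy ih1.1.1
    exact ⟨this, H.exR hy ih1.1.1 ih2.1 this ih1.2 ih2.2⟩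
  | @exT i y z hi hy _ _ ih1 ih2 =>
    simp at ih1 ih2 ⊢
    have := hL y hy ih1.1.1
    exact ⟨this, H.exT hi hy ih1.1.1 ih2.1 this ih1.2 ih2.2⟩

theorem Ch.mono {M : TCM} {I : Finset Atom} {K : ℕ} {L L' : ℕ → Prop} (h : ∀ y, L y → L' y)
    {P : ℕ} {l : List ℕ} (hc : Ch M I K L P l) : Ch M I K L' P l := by
  refine (Ch.sub (D := fun _ => True) (A := Ch M I K L') ?_ (by simp) (by simp) hc).2
  constructor <;> intros
  · exact .facts _ ‹_›
  · exact .s ‹_›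
  · exact .r ‹_› ‹_› ‹_›
  · exact .t ‹_› ‹_› ‹_› ‹_›
  · exact .flood ‹_›
  · exact .send ‹_›
  · exact .ginit ‹_› ‹_›
  · exact .gstep ‹_› ‹_› ‹_› ‹_›
  · exact .fg ‹_› ‹_›
  · exact .fr ‹_› ‹_› ‹_›
  · exact .ft ‹_› ‹_› ‹_› ‹_›
  · exact .exS (h _ ‹_›) ‹_› ‹_›
  · exact .exR (h _ ‹_›) ‹_› ‹_›
  · exact .exT ‹_› (h _ ‹_›) ‹_› ‹_›

/-! ### Rules as lists -/

abbrev LRule : Type := List Atom × List Atom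

def toR (l : LRule) : Rule := (l.1.toFinset, l.2.toFinset)

def spathL (a b base n : ℕ) : List Atom :=
  (List.range n).map fun j => (pS, [pathVar a b base n j, pathVar a b base n (j + 1)])

def lS : LRule := ([(pS0, [vt 0, vt 1])], [(pS, [vt 0, vt 1])])
def lR (p i : ℕ) : LRule :=
  ([(pR i, [vt 0, vt 1]), (pS, [vt 1, vt 2])], [(pR ((i + 1) % p), [vt 0, vt 2])])
def lT (r q i : ℕ) : LRule :=
  ((pT i, [vt 0, vt 1, vt 2]) :: (spathL 1 3 10 r ++ spathL 2 4 (11 + r) q),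
    [(pT i, [vt 0, vt 3, vt 4])])
def lFP : LRule := ([(pS, [vt 0, vt 1])], [(pFlood, [vt 1])])
def lSE : LRule := ([(pEnd, [vt 0])], [(pS, [vt 0, vt 0])])
def lGI : LRule := ([(pS, [vt 0, vt 11]), (pS, [vt 11, vt 1])], [(pG, [vt 0, vt 1])])
def lGS (i : ℕ) : LRule :=
  ([(pG, [vt 0, vt 1]), (pR i, [vt 0, vt 1]), (pT i, [vt 0, vt 1, vt 2])],
    [(pG, [vt 0, vt 2])])
def lFG (p : ℕ) : LRule :=
  ([(pFlood, [vt 0]), (pFlood, [vt 1]), (pFlood, [vt 2])],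
    (pG, [vt 0, vt 1]) :: (List.range p).flatMap fun j =>
        [(pR j, [vt 0, vt 1]), (pT j, [vt 0, vt 1, vt 2])])
def lEx (p : ℕ) : LRule :=
  ([(pG, [vt 1, vt 2]), (pEnd, [vt 2])],
    (pS0, [vt 0, vt 1]) :: (pR 0, [vt 0, vt 0]) ::
      (List.range p).map fun j => (pT j, [vt 0, vt 0, vt 0]))

def rulesL (p : ℕ) (r q : ℕ → ℕ) : List LRule :=
  lS :: lFP :: lSE :: lGI :: lFG p ::
    (List.range p).flatMap fun i => [lR p i, lT (r i) (q i) i, lGS i]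

theorem mem_rulesL {p : ℕ} {r q : ℕ → ℕ} {l : LRule} : l ∈ rulesL p r q ↔
    l = lS ∨ l = lFP ∨ l = lSE ∨ l = lGI ∨ l = lFG p ∨
      ∃ i < p, l = lR p i ∨ l = lT (r i) (q i) i ∨ l = lGS i := by
  simp [rulesL]

theorem toR_lS : toR lS = ruleS := by ext <;> simp [toR, lS, ruleS]
theorem toR_lFP : toR lFP = ruleFloodProp := by ext <;> simp [toR, lFP, ruleFloodProp]
theorem toR_lSE : toR lSE = ruleSEnd := by ext <;> simp [toR, lSE, ruleSEnd]
theorem toR_lGI : toR lGI = ruleGInit := by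
  ext <;> simp [toR, lGI, ruleGInit, spath, Finset.range_add_one, pathVar, or_comm]
theorem toR_lR (M : TCM) (i : ℕ) : toR (lR M.p i) = ruleR M i := by
  ext <;> simp [toR, lR, ruleR]
theorem toR_lGS (i : ℕ) : toR (lGS i) = ruleGStep i := by
  ext <;> simp [toR, lGS, ruleGStep]
theorem toR_lFG (M : TCM) : toR (lFG M.p) = ruleFloodGen M := by
  ext <;> simp [toR, lFG, ruleFloodGen]
theorem toR_lEx (M : TCM) : toR (lEx M.p) = ruleEx M := by
  ext <;> simp [toR, lEx, ruleEx, eq_comm]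
theorem toR_lT (M : TCM) (i : ℕ) : toR (lT (M.ri i) (M.qi i) i) = ruleT M i := by
  ext <;> simp [toR, lT, ruleT, spath, spathL]

theorem mem_RM {M : TCM} {R : Rule} : R ∈ RM M ↔
    R = toR (lEx M.p) ∨ ∃ l ∈ rulesL M.p M.ri M.qi, R = toR l := by
  constructor
  · intro h
    simp only [RM, Finset.mem_union, Finset.mem_insert, Finset.mem_singleton, Finset.mem_biUnion,
      Finset.mem_range] at h
    simp only [mem_rulesL]
    rcases h with (h | h | h | h | h | h) | ⟨i, hi, h | h | h⟩
    · exact .inr ⟨lS, by simp, by rw [h, toR_lS]⟩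
    · exact .inr ⟨lFP, by simp, by rw [h, toR_lFP]⟩
    · exact .inr ⟨lSE, by simp, by rw [h, toR_lSE]⟩
    · exact .inr ⟨lGI, by simp, by rw [h, toR_lGI]⟩
    · exact .inr ⟨lFG M.p, by simp, by rw [h, toR_lFG]⟩
    · exact .inl (by rw [h, toR_lEx])
    · exact .inr ⟨lR M.p i, by grind, by rw [h, toR_lR]⟩
    · exact .inr ⟨lT (M.ri i) (M.qi i) i, by grind, by rw [h, toR_lT]⟩
    · exact .inr ⟨lGS i, by grind, by rw [h, toR_lGS]⟩
  · simp only [mem_rulesL]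
    simp only [RM, Finset.mem_union, Finset.mem_insert, Finset.mem_singleton, Finset.mem_biUnion,
      Finset.mem_range]
    rintro (h | ⟨l, h | h | h | h | h | ⟨i, hi, h | h | h⟩, h'⟩)
    · rw [toR_lEx] at h; tauto
    · rw [h, toR_lS] at h'; tauto
    · rw [h, toR_lFP] at h'; tauto
    · rw [h, toR_lSE] at h'; tauto
    · rw [h, toR_lGI] at h'; tauto
    · rw [h, toR_lFG] at h'; tauto
    · rw [h, toR_lR] at h'; exact .inr ⟨i, hi, by tauto⟩
    · rw [h, toR_lT] at h'; exact .inr ⟨i, hi, by tauto⟩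
    · rw [h, toR_lGS] at h'; exact .inr ⟨i, hi, by tauto⟩

def HoldsL (A : ℕ → List ℕ → Prop) (s : Var → ℕ) (l : List Atom) : Prop :=
  ∀ a ∈ l, A a.1 (a.2.map (ev s))

def Sat (D : ℕ → Prop) (A : ℕ → List ℕ → Prop) (l : LRule) : Prop :=
  ∀ s : Var → ℕ, (∀ v, D (s v)) → HoldsL A s l.1 → HoldsL A s l.2

def SatEx (K : ℕ) (D L : ℕ → Prop) (A : ℕ → List ℕ → Prop) (l : LRule) : Prop :=
  ∀ s : Var → ℕ, (∀ v, D (s v)) → L (s (Sum.inl 1)) →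
    s (Sum.inl 0) = s (Sum.inl 1) + K → HoldsL A s l.1 → HoldsL A s l.2

structure Gen (M : TCM) (I : Finset Atom) (K : ℕ) (D L : ℕ → Prop) (A : ℕ → List ℕ → Prop) :
    Prop where
  facts : ∀ a ∈ I, A a.1 (a.2.map tc)
  dat : ∀ l ∈ rulesL M.p M.ri M.qi, Sat D A l
  ex : SatEx K D L A (lEx M.p)

@[simp] theorem ev_vt (s : Var → ℕ) (n : ℕ) : ev s (vt n) = s (Sum.inl n) := rfl

/-- Assignment given by a list of values. -/
def asg (l : List ℕ) : Var → ℕ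
  | Sum.inl n => l.getD n 0
  | Sum.inr _ => 0

theorem asg_D {D : ℕ → Prop} (h0 : D 0) {l : List ℕ} (h : ∀ n ∈ l, D n) (v : Var) :
    D (asg l v) := by
  rcases v with n | v
  · simp only [asg, List.getD_eq_getElem?_getD]
    by_cases hn : n < l.length
    · simp [hn]; exact h _ (List.getElem_mem hn)
    · simp [hn, h0]
  · exact h0

def asgT (x r q : ℕ) (f g : ℕ → ℕ) : Var → ℕ
  | Sum.inl n => if n = 0 then x else if n = 1 then f 0 else if n = 2 then g 0 else
      if n = 3 then f r else if n = 4 then g q else if n < 11 + r then f (min r (n - 10))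
      else g (min q (n - (11 + r)))
  | Sum.inr _ => 0

theorem gen_hc {M : TCM} {I : Finset Atom} {K : ℕ} {D L : ℕ → Prop} {A : ℕ → List ℕ → Prop}
    (h0 : D 0) (hr : ∀ i, 0 < M.ri i) (hq : ∀ i, 0 < M.qi i)
    (H : Gen M I K D L A) : HC M I K D L A where
  facts := H.facts
  s := by
    intro x y hx hy h
    have := H.dat lS (by simp [mem_rulesL]) (asg [x, y]) (asg_D h0 (by simp [hx, hy]))
    simpa [HoldsL, lS, asg, h] using this
  r := by
    intro i x y z hi hx hy hz h1 h2
    have := H.dat (lR M.p i) (by rw [mem_rulesL]; grind) (asg [x, y, z])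
      (asg_D h0 (by simp [hx, hy, hz]))
    simpa [HoldsL, lR, asg, h1, h2] using this
  t := by
    intro i x f g hi hx hf hg h1 h2 h3
    have hri := hr i
    have hqi := hq i
    have := H.dat (lT (M.ri i) (M.qi i) i) (by rw [mem_rulesL]; grind)
      (asgT x (M.ri i) (M.qi i) f g) (by
        rintro (n | v)
        · simp only [asgT]
          split_ifs <;> first | exact hx | exact h0 | exact hf _ (by simp) | exact hg _ (by simp)
        · exact h0)
    have hb : HoldsL A (asgT x (M.ri i) (M.qi i) f g) (lT (M.ri i) (M.qi i) i).1 := by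
      intro a ha
      simp only [lT, spathL, List.mem_cons, List.mem_append, List.mem_map, List.mem_range] at ha
      rcases ha with rfl | ⟨j, hj, rfl⟩ | ⟨j, hj, rfl⟩
      · simpa [asgT] using h1
      · have key : ∀ k ≤ M.ri i, ev (asgT x (M.ri i) (M.qi i) f g)
            (pathVar 1 3 10 (M.ri i) k) = f k := by
          intro k hk
          unfold pathVar
          split_ifs with e1 e2
          · subst e1; simp [asgT]
          · subst e2; simp [asgT]
          · simp only [ev_vt, asgT]
            rw [if_neg (by omega), if_neg (by omega), if_neg (by omega), if_neg (by omega),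
              if_neg (by omega), if_pos (by omega)]
            congr 1; omega
        simp only [List.map_cons, List.map_nil]
        rw [key j (by omega), key (j + 1) (by omega)]
        exact h2 j hj
      · have key : ∀ k ≤ M.qi i, ev (asgT x (M.ri i) (M.qi i) f g)
            (pathVar 2 4 (11 + M.ri i) (M.qi i) k) = g k := by
          intro k hk
          unfold pathVar
          split_ifs with e1 e2
          · subst e1; simp [asgT]
          · subst e2; simp [asgT]
          · simp only [ev_vt, asgT]
            rw [if_neg (by omega), if_neg (by omega), if_neg (by omega), if_neg (by omega),
              if_neg (by omega), if_neg (by omega)]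
            congr 1; omega
        simp only [List.map_cons, List.map_nil]
        rw [key j (by omega), key (j + 1) (by omega)]
        exact h3 j hj
    have h4 := this hb (pT i, [vt 0, vt 3, vt 4]) (by simp [lT])
    simpa [asgT] using h4
  flood := by
    intro x y hx hy h
    have := H.dat lFP (by simp [mem_rulesL]) (asg [x, y]) (asg_D h0 (by simp [hx, hy]))
    simpa [HoldsL, lFP, asg, h] using this
  send := by
    intro x hx h
    have := H.dat lSE (by simp [mem_rulesL]) (asg [x]) (asg_D h0 (by simp [hx]))
    simpa [HoldsL, lSE, asg, h] using this
  ginit := by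
    intro x y z hx hy hz h1 h2
    have := H.dat lGI (by simp [mem_rulesL]) (asg [x, z, 0, 0, 0, 0, 0, 0, 0, 0, 0, y])
      (asg_D h0 (by simp [hx, hy, hz, h0]))
    simpa [HoldsL, lGI, asg, h1, h2] using this
  gstep := by
    intro i x y z hi hx hy hz h1 h2 h3
    have := H.dat (lGS i) (by rw [mem_rulesL]; grind) (asg [x, y, z])
      (asg_D h0 (by simp [hx, hy, hz]))
    simpa [HoldsL, lGS, asg, h1, h2, h3] using this
  fg := by
    intro x y hx hy h1 h2
    have := H.dat (lFG M.p) (by simp [mem_rulesL]) (asg [x, y, y])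
      (asg_D h0 (by simp [hx, hy])) (by simp [HoldsL, lFG, asg, h1, h2])
      (pG, [vt 0, vt 1]) (by simp [lFG])
    simpa [asg] using this
  fr := by
    intro i x y hi hx hy h1 h2
    have := H.dat (lFG M.p) (by simp [mem_rulesL]) (asg [x, y, y])
      (asg_D h0 (by simp [hx, hy])) (by simp [HoldsL, lFG, asg, h1, h2])
      (pR i, [vt 0, vt 1]) (by simp [lFG]; exact .inr ⟨i, hi, by simp⟩)
    simpa [asg] using this
  ft := by
    intro i x y z hi hx hy hz h1 h2 h3
    have := H.dat (lFG M.p) (by simp [mem_rulesL]) (asg [x, y, z])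
      (asg_D h0 (by simp [hx, hy, hz])) (by simp [HoldsL, lFG, asg, h1, h2, h3])
      (pT i, [vt 0, vt 1, vt 2]) (by simp [lFG]; exact ⟨i, hi, rfl⟩)
    simpa [asg] using this
  exS := by
    intro y z hy h1 h2 h3 h4 h5
    have := H.ex (asg [y + K, y, z])
      (asg_D h0 (by simp [h1, h2, h3])) hy rfl (by simp [HoldsL, lEx, asg, h4, h5])
      (pS0, [vt 0, vt 1]) (by simp [lEx])
    simpa [asg] using this
  exR := by
    intro y z hy h1 h2 h3 h4 h5
    have := H.ex (asg [y + K, y, z])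
      (asg_D h0 (by simp [h1, h2, h3])) hy rfl (by simp [HoldsL, lEx, asg, h4, h5])
      (pR 0, [vt 0, vt 0]) (by simp [lEx])
    simpa [asg] using this
  exT := by
    intro i y z hi hy h1 h2 h3 h4 h5
    have := H.ex (asg [y + K, y, z])
      (asg_D h0 (by simp [h1, h2, h3])) hy rfl (by simp [HoldsL, lEx, asg, h4, h5])
      (pT i, [vt 0, vt 0, vt 0]) (by simp [lEx]; exact ⟨i, hi, rfl⟩)
    simpa [asg] using this

theorem ch_gen (M : TCM) (I : Finset Atom) (K : ℕ) (D L : ℕ → Prop)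
    (hr : ∀ i, 0 < M.ri i) (hq : ∀ i, 0 < M.qi i) :
    Gen M I K D L (Ch M I K L) where
  facts := fun a ha => .facts a ha
  dat := by
    intro l hl s _ hb
    rw [mem_rulesL] at hl
    rcases hl with rfl | rfl | rfl | rfl | rfl | ⟨i, hi, rfl | rfl | rfl⟩
    · simp [HoldsL, lS] at hb ⊢; exact .s hb
    · simp [HoldsL, lFP] at hb ⊢; exact .flood hb
    · simp [HoldsL, lSE] at hb ⊢; exact .send hb
    · simp [HoldsL, lGI] at hb ⊢; exact .ginit hb.1 hb.2
    · simp only [HoldsL, lFG, List.mem_cons, List.not_mem_nil, or_false, forall_eq_or_imp,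
        forall_eq, List.map_cons, List.map_nil, ev_vt] at hb
      intro a ha
      simp only [lFG, List.mem_cons, List.mem_flatMap, List.mem_range, List.not_mem_nil,
        or_false] at ha
      rcases ha with rfl | ⟨i, hi, rfl | rfl⟩
      · exact .fg hb.1 hb.2.1
      · exact .fr hi hb.1 hb.2.1
      · exact .ft hi hb.1 hb.2.1 hb.2.2
    · simp [HoldsL, lR] at hb ⊢; exact .r hi hb.1 hb.2
    · have hri := hr i
      have hqi := hq i
      have h1 := hb (pT i, [vt 0, vt 1, vt 2]) (by simp [lT])
      have := Ch.t (M := M) (I := I) (K := K) (L := L) (i := i) (x := s (Sum.inl 0))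
        (f := fun j => ev s (pathVar 1 3 10 (M.ri i) j))
        (g := fun j => ev s (pathVar 2 4 (11 + M.ri i) (M.qi i) j)) hi
        (by simpa [pathVar] using h1)
        (fun j hj => by
          have := hb (pS, [pathVar 1 3 10 (M.ri i) j, pathVar 1 3 10 (M.ri i) (j + 1)])
            (by simp only [lT, spathL, List.mem_cons, List.mem_append, List.mem_map,
                  List.mem_range]; exact .inr (.inl ⟨j, hj, rfl⟩))
          simpa using this)
        (fun j hj => by
          have := hb (pS, [pathVar 2 4 (11 + M.ri i) (M.qi i) j,
              pathVar 2 4 (11 + M.ri i) (M.qi i) (j + 1)])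
            (by simp only [lT, spathL, List.mem_cons, List.mem_append, List.mem_map,
                  List.mem_range]; exact .inr (.inr ⟨j, hj, rfl⟩))
          simpa using this)
      simp [HoldsL, lT]
      simpa [pathVar, hri.ne', hqi.ne'] using this
    · simp [HoldsL, lGS] at hb ⊢; exact .gstep hi hb.1 hb.2.1 hb.2.2
  ex := by
    intro s _ hL h0 hb
    simp only [HoldsL, lEx, List.mem_cons, List.not_mem_nil, or_false, forall_eq_or_imp,
        forall_eq, List.map_cons, List.map_nil, ev_vt] at hb
    intro a ha
    simp only [lEx, List.mem_cons, List.mem_map, List.mem_range] at ha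
    rcases ha with rfl | rfl | ⟨i, hi, rfl⟩
    · simp only [List.map_cons, List.map_nil, ev_vt, h0]; exact .exS hL hb.1 hb.2
    · simp only [List.map_cons, List.map_nil, ev_vt, h0]; exact .exR hL hb.1 hb.2
    · simp only [List.map_cons, List.map_nil, ev_vt, h0]; exact .exT hi hL hb.1 hb.2


/-! ### Positivity of the coefficients -/

theorem nextPrime_spec (n : ℕ) : n + 1 ≤ nextPrime n ∧ (nextPrime n).Prime :=
  Nat.find_spec (Nat.exists_infinite_primes (n + 1))

theorem prm_pos (k : ℕ) : 0 < prm k := by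
  cases k with
  | zero => simp [prm]
  | succ k => exact (nextPrime_spec (prm k)).2.pos

theorem qr_pos (M : TCM) (i : ℕ) : 0 < (M.qr i).1 ∧ 0 < (M.qr i).2 := by
  have key : ∀ a b : ℕ, 0 < a → 0 < b → 0 < a / Nat.gcd a b ∧ 0 < b / Nat.gcd a b :=
    fun a b ha hb => ⟨Nat.div_pos (Nat.gcd_le_left b ha) (Nat.gcd_pos_of_pos_left b ha),
      Nat.div_pos (Nat.gcd_le_right a hb) (Nat.gcd_pos_of_pos_left b ha)⟩
  have ip : ∀ (c : Prop) [Decidable c] (k : ℕ), 0 < (if c then prm k else 1) := by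
    intro c _ k
    split_ifs
    · exact prm_pos k
    · exact one_pos
  unfold TCM.qr
  split
  · simp
  · dsimp only
    split
    · simp
    · apply key
      · exact Nat.mul_pos (Nat.mul_pos (Nat.mul_pos (prm_pos _) (prm_pos _)) (ip _ _)) (ip _ _)
      · exact Nat.mul_pos (Nat.mul_pos (prm_pos _) (ip _ _)) (ip _ _)

theorem ri_pos (M : TCM) (i : ℕ) : 0 < M.ri i := (qr_pos M i).2
theorem qi_pos (M : TCM) (i : ℕ) : 0 < M.qi i := (qr_pos M i).1

/-! ### Universal model -/

def td (n : ℕ) : FTerm := Denumerable.ofNat FTerm n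

theorem tc_td (n : ℕ) : tc (td n) = n := Denumerable.encode_ofNat n
theorem td_tc (t : FTerm) : td (tc t) = t := Denumerable.ofNat_encode t

theorem ev_tc (σ : Subst) (t : FTerm) : ev (fun v => tc (σ v)) t = tc (applyT σ t) := by
  rcases t with c | v <;> rfl

theorem mem_varsF {A : Finset Atom} {v : Var} : v ∈ varsF A ↔ ∃ a ∈ A, Sum.inr v ∈ a.2 := by
  simp only [varsF, atomVarsF, Finset.mem_biUnion, List.mem_toFinset, List.mem_filterMap]
  constructor
  · rintro ⟨a, ha, t, ht, e⟩
    rcases t with c | w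
    · simp at e
    · simp at e; subst e; exact ⟨a, ha, ht⟩
  · rintro ⟨a, ha, h⟩
    exact ⟨a, ha, _, h, by simp⟩

theorem spathL_var {a b base n : ℕ} {x : Atom} (hx : x ∈ spathL a b base n) :
    ∀ t ∈ x.2, ∃ k, t = vt k := by
  have key : ∀ j, ∃ k, pathVar a b base n j = vt k := by
    intro j
    unfold pathVar
    split_ifs
    · exact ⟨_, rfl⟩
    · exact ⟨_, rfl⟩
    · exact ⟨_, rfl⟩
  simp only [spathL, List.mem_map, List.mem_range] at hx
  obtain ⟨j, _, rfl⟩ := hx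
  intro t ht
  simp only [List.mem_cons, List.not_mem_nil, or_false] at ht
  rcases ht with rfl | rfl
  · exact key _
  · exact key _

theorem spathL_last {a b base n : ℕ} (hn : 0 < n) :
    ∃ x ∈ spathL a b base n, vt b ∈ x.2 := by
  refine ⟨(pS, [pathVar a b base n (n - 1), pathVar a b base n (n - 1 + 1)]), ?_, ?_⟩
  · simp only [spathL, List.mem_map, List.mem_range]
    exact ⟨n - 1, by omega, rfl⟩
  · have : n - 1 + 1 = n := by omega
    rw [this]
    simp [pathVar, hn.ne']

theorem rules_body_var {M : TCM} {l : LRule} (hl : l ∈ rulesL M.p M.ri M.qi) :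
    ∀ a ∈ l.1, ∀ t ∈ a.2, ∃ k, t = vt k := by
  rw [mem_rulesL] at hl
  rcases hl with rfl | rfl | rfl | rfl | rfl | ⟨i, hi, rfl | rfl | rfl⟩
  · simp [lS, vt]
  · simp [lFP, vt]
  · simp [lSE, vt]
  · simp [lGI, vt]
  · simp [lFG, vt]
  · simp [lR, vt]
  · intro a ha
    simp only [lT, List.mem_cons, List.mem_append] at ha
    rcases ha with rfl | h | h
    · simp [vt]
    · exact spathL_var h
    · exact spathL_var h
  · simp [lGS, vt]

theorem rules_head_var {M : TCM} {l : LRule} (hl : l ∈ rulesL M.p M.ri M.qi) :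
    ∀ a ∈ l.2, ∀ t ∈ a.2, ∃ a' ∈ l.1, t ∈ a'.2 := by
  rw [mem_rulesL] at hl
  rcases hl with rfl | rfl | rfl | rfl | rfl | ⟨i, hi, rfl | rfl | rfl⟩
  · simp [lS, vt]
  · simp [lFP, vt]
  · simp [lSE, vt]
  · simp [lGI, vt]
  · intro a ha
    simp only [lFG, List.mem_cons, List.mem_flatMap, List.mem_range, List.not_mem_nil,
        or_false] at ha
    rcases ha with rfl | ⟨i, hi, rfl | rfl⟩ <;> simp [lFG, vt]
  · simp [lR, vt]
  · intro a ha t ht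
    simp only [lT, List.mem_singleton] at ha
    subst ha
    simp only [List.mem_cons, List.not_mem_nil, or_false] at ht
    rcases ht with rfl | rfl | rfl
    · exact ⟨_, List.mem_cons_self, by simp⟩
    · obtain ⟨x, hx, h⟩ := spathL_last (a := 1) (b := 3) (base := 10) (ri_pos M i)
      exact ⟨x, by simp [lT, hx], h⟩
    · obtain ⟨x, hx, h⟩ := spathL_last (a := 2) (b := 4) (base := 11 + M.ri i) (qi_pos M i)
      exact ⟨x, by simp [lT, hx], h⟩
  · simp [lGS, vt]

/-- The unrestricted canonical chase. -/
abbrev Chi (M : TCM) (I : Finset Atom) (K : ℕ) : ℕ → List ℕ → Prop := Ch M I K (fun _ => True)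

def canon (M : TCM) (I : Finset Atom) (K : ℕ) : Set Atom := {a | Chi M I K a.1 (a.2.map tc)}

theorem applyA_mem_canon {M : TCM} {I : Finset Atom} {K : ℕ} {σ : Subst} {a : Atom} :
    applyA σ a ∈ canon M I K ↔ Chi M I K a.1 (a.2.map (ev fun v => tc (σ v))) := by
  have : (applyA σ a).2.map tc = a.2.map (ev fun v => tc (σ v)) := by
    simp only [applyA, List.map_map]
    apply List.map_congr_left
    intro t _
    exact (ev_tc σ t).symm
  change Chi M I K _ _ ↔ _
  rw [this]
  rfl

theorem canon_model (M : TCM) (I : Finset Atom) (K : ℕ) :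
    IsModel (RM M) (I : Set Atom) (canon M I K) := by
  have G := ch_gen M I K (fun _ => True) (fun _ => True) (ri_pos M) (qi_pos M)
  refine ⟨?_, ?_⟩
  · intro R hR σ hσ
    rw [mem_RM] at hR
    rcases hR with rfl | ⟨l, hl, rfl⟩
    · set σ' : Subst := fun v => if v = Sum.inl 0 then td (tc (σ (Sum.inl 1)) + K) else σ v with hσ'
      have hag : ∀ v ∈ varsF (toR (lEx M.p)).1, σ' v = σ v := by
        intro v hv
        rw [mem_varsF] at hv
        obtain ⟨a, ha, hv⟩ := hv
        have : v ≠ Sum.inl 0 := by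
          rintro rfl
          simp only [toR, lEx, List.mem_toFinset, List.mem_cons, List.not_mem_nil, or_false] at ha
          rcases ha with rfl | rfl <;> simp [vt] at hv
        simp [hσ', this]
      refine ⟨σ', hag, ?_⟩
      have := G.ex (fun v => tc (σ' v)) (fun _ => trivial) trivial (by simp [hσ', tc_td]) ?_
      · intro a ha
        rw [applyA_mem_canon]
        exact this a (by simpa [toR] using ha)
      · intro a ha
        have h1 := hσ a (by simpa [toR] using ha)
        rw [applyA_mem_canon] at h1
        convert h1 using 1
        apply List.map_congr_left
        intro t ht
        rcases t with c | v
        · rfl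
        · simp only [ev]
          rw [hag v (by rw [mem_varsF]; exact ⟨a, by simpa [toR] using ha, ht⟩)]
    · refine ⟨σ, fun _ _ => rfl, ?_⟩
      intro a ha
      rw [applyA_mem_canon]
      refine G.dat l hl (fun v => tc (σ v)) (fun _ => trivial) ?_ a (by simpa [toR] using ha)
      intro b hb
      have h1 := hσ b (by simpa [toR] using hb)
      rwa [applyA_mem_canon] at h1
  · refine ⟨Sum.inr, fun a ha => ?_⟩
    rw [applyA_mem_canon]
    have : a.2.map (ev fun v => tc (Sum.inr v)) = a.2.map tc := by
      apply List.map_congr_left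
      intro t _
      rcases t with c | v <;> rfl
    rw [this]
    exact .facts a ha

/-- The homomorphism from the canonical chase into a model. -/
def hmap (h0 : Subst) (w : FTerm → FTerm) (K : ℕ) (n : ℕ) : FTerm :=
  if h : K ≤ n ∧ 0 < K then w (hmap h0 w K (n - K)) else applyT h0 (td n)
termination_by n
decreasing_by omega

theorem hmap_add (h0 : Subst) (w : FTerm → FTerm) {K : ℕ} (hK : 0 < K) (n : ℕ) :
    hmap h0 w K (n + K) = w (hmap h0 w K n) := by
  rw [hmap, dif_pos ⟨by omega, hK⟩, Nat.add_sub_cancel]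

theorem hmap_tc (h0 : Subst) (w : FTerm → FTerm) {K : ℕ} {t : FTerm} (h : tc t < K) :
    hmap h0 w K (tc t) = applyT h0 t := by
  rw [hmap, dif_neg (by omega), td_tc]

theorem chi_to_model {M : TCM} {I : Finset Atom} {K : ℕ} (hK : 0 < K)
    (hI : ∀ a ∈ I, ∀ t ∈ a.2, tc t < K) {J : Set Atom} (hJ : IsModel (RM M) (I : Set Atom) J) :
    ∃ h : ℕ → FTerm, (∀ c, tc (Sum.inl c) < K → h (tc (Sum.inl c)) = Sum.inl c) ∧
      ∀ P l, Chi M I K P l → (P, l.map h) ∈ J := by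
  obtain ⟨hsat, h0, hh0⟩ := hJ
  have hw : ∀ y : FTerm, ∃ x : FTerm, (∃ z, (pG, [y, z]) ∈ J ∧ (pEnd, [z]) ∈ J) →
      ((pS0, [x, y]) ∈ J ∧ (pR 0, [x, x]) ∈ J ∧ ∀ j < M.p, (pT j, [x, x, x]) ∈ J) := by
    intro y
    by_cases hz : ∃ z, (pG, [y, z]) ∈ J ∧ (pEnd, [z]) ∈ J
    · obtain ⟨z, h1, h2⟩ := hz
      obtain ⟨σ', h3, h4⟩ := hsat (toR (lEx M.p)) (mem_RM.2 (.inl rfl))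
        (fun v => if v = Sum.inl 1 then y else z) (by
          intro a ha
          simp only [toR, lEx, List.coe_toFinset, Set.mem_setOf_eq, List.mem_cons,
            List.not_mem_nil, or_false] at ha
          rcases ha with rfl | rfl
          · simpa [applyA, applyT, vt] using h1
          · simpa [applyA, applyT, vt] using h2)
      have e1 : σ' (Sum.inl 1) = y := by
        rw [h3 _ (by rw [mem_varsF]; exact ⟨(pG, [vt 1, vt 2]), by simp [toR, lEx], by simp [vt]⟩)]
        simp
      refine ⟨σ' (Sum.inl 0), fun _ => ⟨?_, ?_, ?_⟩⟩
      · have := h4 (pS0, [vt 0, vt 1]) (by simp [toR, lEx])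
        simpa [applyA, applyT, vt, e1] using this
      · have := h4 (pR 0, [vt 0, vt 0]) (by simp [toR, lEx])
        simpa [applyA, applyT, vt, e1] using this
      · intro j hj
        have := h4 (pT j, [vt 0, vt 0, vt 0]) (by simp [toR, lEx]; exact ⟨j, hj, rfl⟩)
        simpa [applyA, applyT, vt, e1] using this
    · exact ⟨y, fun h => absurd h hz⟩
  choose w hw using hw
  refine ⟨hmap h0 w K, fun c hc => by rw [hmap_tc _ _ hc]; rfl, ?_⟩
  set h := hmap h0 w K with hh
  intro P l hc
  refine (Ch.sub (D := fun _ => True) (A := fun P l => (P, l.map h) ∈ J) ?_ (by simp) (by simp)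
    hc).2
  apply gen_hc trivial (ri_pos M) (qi_pos M)
  refine ⟨?_, ?_, ?_⟩
  · intro a ha
    have h1 := hh0 a ha
    convert h1 using 1
    simp only [applyA, List.map_map, Prod.mk.injEq, true_and]
    apply List.map_congr_left
    intro t ht
    exact hmap_tc _ _ (hI a ha t ht)
  · intro l hl s _ hb
    obtain ⟨σ', h1, h2⟩ := hsat (toR l) (mem_RM.2 (.inr ⟨l, hl, rfl⟩)) (fun v => h (s v)) (by
      intro a ha
      have ha' : a ∈ l.1 := by simpa [toR] using ha
      have := hb a ha'
      convert this using 1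
      simp only [applyA, List.map_map, Prod.mk.injEq, true_and]
      apply List.map_congr_left
      intro t ht
      obtain ⟨k, rfl⟩ := rules_body_var hl a ha' t ht
      rfl)
    intro a ha
    have := h2 a (by simpa [toR] using ha)
    convert this using 1
    simp only [applyA, List.map_map, Prod.mk.injEq, true_and]
    apply List.map_congr_left
    intro t ht
    obtain ⟨a', ha', ht'⟩ := rules_head_var hl a ha t ht
    obtain ⟨k, rfl⟩ := rules_body_var hl a' ha' t ht'
    have h5 := h1 (Sum.inl k) (by rw [mem_varsF]; exact ⟨a', by simpa [toR] using ha', ht'⟩)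
    simp only [vt, Function.comp, ev, applyT]
    exact h5.symm
  · intro s _ _ h01 hb
    have hb1 := hb (pG, [vt 1, vt 2]) (by simp [lEx])
    have hb2 := hb (pEnd, [vt 2]) (by simp [lEx])
    simp only [List.map_cons, List.map_nil, ev_vt] at hb1 hb2
    have hx : h (s (Sum.inl 0)) = w (h (s (Sum.inl 1))) := by
      rw [h01]; exact hmap_add h0 w hK _
    obtain ⟨w1, w2, w3⟩ := hw (h (s (Sum.inl 1))) ⟨_, hb1, hb2⟩
    intro a ha
    simp only [lEx, List.mem_cons, List.mem_map, List.mem_range] at ha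
    rcases ha with rfl | rfl | ⟨i, hi, rfl⟩
    · simpa [hx] using w1
    · simpa [hx] using w2
    · simpa [hx] using w3 i hi

theorem entails_iff {M : TCM} {I q : Finset Atom} {K : ℕ} (hK : 0 < K)
    (hI : ∀ a ∈ I, ∀ t ∈ a.2, tc t < K) (hq : ∀ a ∈ q, ∀ t ∈ a.2, tc t < K) :
    Entails (RM M) (I : Set Atom) (q : Set Atom) ↔
      ∃ s : Var → ℕ, ∀ a ∈ q, Chi M I K a.1 (a.2.map (ev s)) := by
  constructor
  · intro h
    obtain ⟨σ, hσ⟩ := h _ (canon_model M I K)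
    refine ⟨fun v => tc (σ v), fun a ha => ?_⟩
    have := hσ a ha
    rwa [applyA_mem_canon] at this
  · rintro ⟨s, hs⟩ J hJ
    obtain ⟨h, h1, h2⟩ := chi_to_model hK hI hJ
    refine ⟨fun v => h (s v), fun a ha => ?_⟩
    have := h2 _ _ (hs a ha)
    convert this using 1
    simp only [applyA, List.map_map, Prod.mk.injEq, true_and]
    apply List.map_congr_left
    intro t ht
    rcases t with c | v
    · exact (h1 c (hq a ha _ ht)).symm
    · rfl



/-! ### Families of predicates -/

def Fam (p : ℕ) (e f : ℕ → Prop) (s0 s g : ℕ → ℕ → Prop) (R : ℕ → ℕ → ℕ → Prop)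
    (T : ℕ → ℕ → ℕ → ℕ → Prop) (P : ℕ) : List ℕ → Prop
  | [x] => (P = pEnd ∧ e x) ∨ (P = pFlood ∧ f x)
  | [x, y] => (P = pS0 ∧ s0 x y) ∨ (P = pS ∧ s x y) ∨ (P = pG ∧ g x y) ∨
      ∃ i < p, P = pR i ∧ R i x y
  | [x, y, z] => ∃ i < p, P = pT i ∧ T i x y z
  | _ => False

section Fam
variable {p : ℕ} {e f : ℕ → Prop} {s0 s g : ℕ → ℕ → Prop} {R : ℕ → ℕ → ℕ → Prop}
    {T : ℕ → ℕ → ℕ → ℕ → Prop}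

theorem fam_End {x : ℕ} : Fam p e f s0 s g R T pEnd [x] ↔ e x := by
  simp [Fam, pEnd, pFlood]
theorem fam_Flood {x : ℕ} : Fam p e f s0 s g R T pFlood [x] ↔ f x := by
  simp [Fam, pEnd, pFlood]
theorem fam_S0 {x y : ℕ} : Fam p e f s0 s g R T pS0 [x, y] ↔ s0 x y := by
  simp [Fam, pS0, pS, pG, pR]
  intro i _ h; omega
theorem fam_S {x y : ℕ} : Fam p e f s0 s g R T pS [x, y] ↔ s x y := by
  simp [Fam, pS0, pS, pG, pR]
  intro i _ h; omega
theorem fam_G {x y : ℕ} : Fam p e f s0 s g R T pG [x, y] ↔ g x y := by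
  simp [Fam, pS0, pS, pG, pR]
  intro i _ h; omega
theorem fam_R {i x y : ℕ} (hi : i < p) : Fam p e f s0 s g R T (pR i) [x, y] ↔ R i x y := by
  simp only [Fam, pS0, pS, pG, pR]
  constructor
  · rintro (h | h | h | ⟨j, _, h, h'⟩)
    · omega
    · omega
    · omega
    · have : i = j := by omega
      rwa [this]
  · intro h; exact .inr (.inr (.inr ⟨i, hi, rfl, h⟩))
theorem fam_T {i x y z : ℕ} (hi : i < p) :
    Fam p e f s0 s g R T (pT i) [x, y, z] ↔ T i x y z := by
  simp only [Fam, pT]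
  constructor
  · rintro ⟨j, _, h, h'⟩
    have : i = j := by omega
    rwa [this]
  · intro h; exact ⟨i, hi, rfl, h⟩
end Fam

theorem M_p_pos (M : TCM) : 0 < M.p := Finset.prod_pos fun i _ => prm_pos i

/-- A convenient induction principle. -/
theorem Ch.famInd {M : TCM} {I : Finset Atom} {K : ℕ} {L : ℕ → Prop}
    {e f : ℕ → Prop} {s0 s g : ℕ → ℕ → Prop} {R : ℕ → ℕ → ℕ → Prop}
    {T : ℕ → ℕ → ℕ → ℕ → Prop} (hsig : ∀ a ∈ I, InSig M a) (hI : ∀ a ∈ I, ∀ t ∈ a.2, tc t < K)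
    (ie : ∀ x, x < K → Ch M I K (fun _ => False) pEnd [x] → e x)
    (iF : ∀ x, x < K → Ch M I K (fun _ => False) pFlood [x] → f x)
    (is0 : ∀ x y, x < K → y < K → Ch M I K (fun _ => False) pS0 [x, y] → s0 x y)
    (is : ∀ x y, x < K → y < K → Ch M I K (fun _ => False) pS [x, y] → s x y)
    (ig : ∀ x y, x < K → y < K → Ch M I K (fun _ => False) pG [x, y] → g x y)
    (iR : ∀ i x y, i < M.p → x < K → y < K → Ch M I K (fun _ => False) (pR i) [x, y] → R i x y)
    (iT : ∀ i x y z, i < M.p → x < K → y < K → z < K →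
      Ch M I K (fun _ => False) (pT i) [x, y, z] → T i x y z)
    (hs : ∀ x y, Ch M I K L pS0 [x, y] → s0 x y → s x y)
    (hr : ∀ i x y z, i < M.p → Ch M I K L (pR i) [x, y] → Ch M I K L pS [y, z] → R i x y →
      s y z → R ((i + 1) % M.p) x z)
    (ht : ∀ i x (F G : ℕ → ℕ), i < M.p → Ch M I K L (pT i) [x, F 0, G 0] → T i x (F 0) (G 0) →
      (∀ j < M.ri i, Ch M I K L pS [F j, F (j + 1)] ∧ s (F j) (F (j + 1))) →
      (∀ j < M.qi i, Ch M I K L pS [G j, G (j + 1)] ∧ s (G j) (G (j + 1))) →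
      T i x (F (M.ri i)) (G (M.qi i)))
    (hf : ∀ x y, Ch M I K L pS [x, y] → s x y → f y)
    (hse : ∀ x, Ch M I K L pEnd [x] → e x → s x x)
    (hgi : ∀ x y z, Ch M I K L pS [x, y] → Ch M I K L pS [y, z] → s x y → s y z → g x z)
    (hgs : ∀ i x y z, i < M.p → Ch M I K L pG [x, y] → Ch M I K L (pR i) [x, y] →
      Ch M I K L (pT i) [x, y, z] → g x y → R i x y → T i x y z → g x z)
    (hfg : ∀ x y, Ch M I K L pFlood [x] → Ch M I K L pFlood [y] → f x → f y → g x y)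
    (hfr : ∀ i x y, i < M.p → Ch M I K L pFlood [x] → Ch M I K L pFlood [y] → f x → f y → R i x y)
    (hft : ∀ i x y z, i < M.p → Ch M I K L pFlood [x] → Ch M I K L pFlood [y] →
      Ch M I K L pFlood [z] → f x → f y → f z → T i x y z)
    (hxs : ∀ y z, L y → Ch M I K L pG [y, z] → Ch M I K L pEnd [z] → g y z → e z → s0 (y + K) y)
    (hxr : ∀ y z, L y → Ch M I K L pG [y, z] → Ch M I K L pEnd [z] → g y z → e z →
      R 0 (y + K) (y + K))
    (hxt : ∀ i y z, i < M.p → L y → Ch M I K L pG [y, z] → Ch M I K L pEnd [z] → g y z → e z →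
      T i (y + K) (y + K) (y + K))
    {P : ℕ} {l : List ℕ} (h : Ch M I K L P l) : Fam M.p e f s0 s g R T P l := by
  induction h with
  | facts a h =>
    have hc := Ch.facts (M := M) (K := K) (L := fun _ => False) a h
    have h1 := hsig a h
    have h2 := hI a h
    obtain ⟨P, l⟩ := a
    simp only [InSig] at h1
    rcases h1 with ⟨h1, hl⟩ | ⟨h1, hl⟩ | ⟨h1, hl⟩
    · obtain ⟨x, rfl⟩ := List.length_eq_one_iff.1 hl
      simp at h2 hc ⊢
      rcases h1 with rfl | rfl
      · exact fam_End.2 (ie _ h2 hc)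
      · exact fam_Flood.2 (iF _ h2 hc)
    · obtain ⟨x, y, rfl⟩ := List.length_eq_two.1 hl
      simp at h2 hc ⊢
      rcases h1 with rfl | rfl | rfl | ⟨i, hi, rfl⟩
      · exact fam_S0.2 (is0 _ _ h2.1 h2.2 hc)
      · exact fam_S.2 (is _ _ h2.1 h2.2 hc)
      · exact fam_G.2 (ig _ _ h2.1 h2.2 hc)
      · exact (fam_R hi).2 (iR _ _ _ hi h2.1 h2.2 hc)
    · obtain ⟨x, y, z, rfl⟩ := List.length_eq_three.1 hl
      simp at h2 hc ⊢
      obtain ⟨i, hi, rfl⟩ := h1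
      exact (fam_T hi).2 (iT _ _ _ _ hi h2.1 h2.2.1 h2.2.2 hc)
  | s h ih => exact fam_S.2 (hs _ _ h (fam_S0.1 ih))
  | r hi h1 h2 ih1 ih2 =>
    exact (fam_R (Nat.mod_lt _ (M_p_pos M))).2 (hr _ _ _ _ hi h1 h2 ((fam_R hi).1 ih1) (fam_S.1 ih2))
  | t hi h1 h2 h3 ih1 ih2 ih3 =>
    exact (fam_T hi).2 (ht _ _ _ _ hi h1 ((fam_T hi).1 ih1) (fun j hj => ⟨h2 j hj, fam_S.1 (ih2 j hj)⟩)
      (fun j hj => ⟨h3 j hj, fam_S.1 (ih3 j hj)⟩))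
  | flood h ih => exact fam_Flood.2 (hf _ _ h (fam_S.1 ih))
  | send h ih => exact fam_S.2 (hse _ h (fam_End.1 ih))
  | ginit h1 h2 ih1 ih2 => exact fam_G.2 (hgi _ _ _ h1 h2 (fam_S.1 ih1) (fam_S.1 ih2))
  | gstep hi h1 h2 h3 ih1 ih2 ih3 =>
    exact fam_G.2 (hgs _ _ _ _ hi h1 h2 h3 (fam_G.1 ih1) ((fam_R hi).1 ih2) ((fam_T hi).1 ih3))
  | fg h1 h2 ih1 ih2 => exact fam_G.2 (hfg _ _ h1 h2 (fam_Flood.1 ih1) (fam_Flood.1 ih2))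
  | fr hi h1 h2 ih1 ih2 =>
    exact (fam_R hi).2 (hfr _ _ _ hi h1 h2 (fam_Flood.1 ih1) (fam_Flood.1 ih2))
  | ft hi h1 h2 h3 ih1 ih2 ih3 =>
    exact (fam_T hi).2 (hft _ _ _ _ hi h1 h2 h3 (fam_Flood.1 ih1) (fam_Flood.1 ih2)
      (fam_Flood.1 ih3))
  | exS hy h1 h2 ih1 ih2 => exact fam_S0.2 (hxs _ _ hy h1 h2 (fam_G.1 ih1) (fam_End.1 ih2))
  | exR hy h1 h2 ih1 ih2 =>
    exact (fam_R (M_p_pos M)).2 (hxr _ _ hy h1 h2 (fam_G.1 ih1) (fam_End.1 ih2))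
  | exT hi hy h1 h2 ih1 ih2 =>
    exact (fam_T hi).2 (hxt _ _ _ hi hy h1 h2 (fam_G.1 ih1) (fam_End.1 ih2))

section Comp
variable {M : TCM} {I : Finset Atom} {K b : ℕ} {L : ℕ → Prop}

theorem ch_basic (hsig : ∀ a ∈ I, InSig M a) (hI : ∀ a ∈ I, ∀ t ∈ a.2, tc t < K)
    {P : ℕ} {l : List ℕ} (h : Ch M I K L P l) :
    Fam M.p (fun x => x < K) (fun _ => True) (fun x y => (x < K ∧ y < K) ∨ x = y + K)
      (fun x y => (x < K ∧ y < K) ∨ x = y + K) (fun _ _ => True) (fun _ _ _ => True)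
      (fun _ _ _ _ => True) P l := by
  refine Ch.famInd hsig hI ?_ ?_ ?_ ?_ ?_ ?_ ?_ ?_ ?_ ?_ ?_ ?_ ?_ ?_ ?_ ?_ ?_ ?_ ?_ ?_ h <;>
    simp +contextual

theorem ch_End_lt (hsig : ∀ a ∈ I, InSig M a) (hI : ∀ a ∈ I, ∀ t ∈ a.2, tc t < K) {x : ℕ}
    (h : Ch M I K L pEnd [x]) : x < K :=
  (fam_End (e := fun x => x < K)).1 (ch_basic hsig hI h)

theorem ch_S_cases (hsig : ∀ a ∈ I, InSig M a) (hI : ∀ a ∈ I, ∀ t ∈ a.2, tc t < K) {x y : ℕ}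
    (h : Ch M I K L pS [x, y]) : (x < K ∧ y < K) ∨ x = y + K := fam_S.1 (ch_basic hsig hI h)

theorem ch_S0_cases (hsig : ∀ a ∈ I, InSig M a) (hI : ∀ a ∈ I, ∀ t ∈ a.2, tc t < K) {x y : ℕ}
    (h : Ch M I K L pS0 [x, y]) : (x < K ∧ y < K) ∨ x = y + K := fam_S0.1 (ch_basic hsig hI h)

abbrev Cb (M : TCM) (I : Finset Atom) (K b : ℕ) := Ch M I K (fun y => y < b)

/-- The bounded chase only reaches bounded elements, apart from the first position. -/
theorem cb_inv (hsig : ∀ a ∈ I, InSig M a) (hI : ∀ a ∈ I, ∀ t ∈ a.2, tc t < K) (hKb : K ≤ b)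
    {P : ℕ} {l : List ℕ} (h : Cb M I K b P l) :
    Fam M.p (fun x => x < K) (fun y => y < b) (fun _ y => y < b)
      (fun _ y => y < b) (fun x y => y < b ∨ y = x) (fun _ x y => y < b ∨ y = x)
      (fun _ x y z => (y < b ∨ y = x) ∧ (z < b ∨ z = x)) P l := by
  refine Ch.famInd hsig hI ?_ ?_ ?_ ?_ ?_ ?_ ?_ ?_ ?_ ?_ ?_ ?_ ?_ ?_ ?_ ?_ ?_ ?_ ?_ ?_ h
  · grind
  · grind
  · grind
  · grind
  · grind
  · grind
  · grind
  · grind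
  · grind
  · intro i x F G hi _ _ hF hG
    have h1 := ri_pos M i
    have h2 := qi_pos M i
    have h3 := (hF (M.ri i - 1) (by omega)).2
    have h4 := (hG (M.qi i - 1) (by omega)).2
    rw [Nat.sub_add_cancel h1] at h3
    rw [Nat.sub_add_cancel h2] at h4
    exact ⟨.inl h3, .inl h4⟩
  all_goals grind

/-- Locality: the unrestricted chase agrees with the bounded one on bounded elements. -/
theorem chi_local (hsig : ∀ a ∈ I, InSig M a) (hI : ∀ a ∈ I, ∀ t ∈ a.2, tc t < K) (hKb : K ≤ b)
    {P : ℕ} {l : List ℕ} (h : Chi M I K P l) :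
    Fam M.p (fun x => Cb M I K b pEnd [x]) (fun y => y < b → Cb M I K b pFlood [y])
      (fun x y => y < b → Cb M I K b pS0 [x, y])
      (fun x y => y < b → Cb M I K b pS [x, y])
      (fun x y => x < b → Cb M I K b pG [x, y] ∨
        (Cb M I K b pFlood [x] ∧ (y < b → Cb M I K b pFlood [y])))
      (fun i x y => x < b → Cb M I K b (pR i) [x, y] ∨
        (Cb M I K b pFlood [x] ∧ (y < b → Cb M I K b pFlood [y])))
      (fun i x y z => x < b → Cb M I K b (pT i) [x, y, z] ∨
        (Cb M I K b pFlood [x] ∧ (y < b → Cb M I K b pFlood [y]) ∧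
          (z < b → Cb M I K b pFlood [z]))) P l := by
  have hm : ∀ {P l}, Ch M I K (fun _ => False) P l → Cb M I K b P l :=
    fun h => Ch.mono (by simp) h
  have hGb : ∀ y z, y < b → Chi M I K pEnd [z] → (y < b → Cb M I K b pG [y, z] ∨
        (Cb M I K b pFlood [y] ∧ (z < b → Cb M I K b pFlood [z]))) → Cb M I K b pG [y, z] := by
    intro y z hy hz h
    have := ch_End_lt hsig hI hz
    rcases h hy with h | ⟨h1, h2⟩
    · exact h
    · exact .fg h1 (h2 (by omega))
  refine Ch.famInd hsig hI ?_ ?_ ?_ ?_ ?_ ?_ ?_ ?_ ?_ ?_ ?_ ?_ ?_ ?_ ?_ ?_ ?_ ?_ ?_ ?_ h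
  · intro x _ h; exact hm h
  · intro x _ h _; exact hm h
  · intro x y _ _ h _; exact hm h
  · intro x y _ _ h _; exact hm h
  · intro x y _ _ h _; exact .inl (hm h)
  · intro i x y _ _ _ h _; exact .inl (hm h)
  · intro i x y z _ _ _ _ h _; exact .inl (hm h)
  · intro x y _ h hy; exact .s (h hy)
  · intro i x y z hi h1 h2 ih1 ih2 hx
    rcases ih1 hx with h | ⟨h3, h4⟩
    · have h5 := (fam_R hi).1 (cb_inv hsig hI hKb h)
      have h6 := ch_S_cases hsig hI h2
      exact .inl (.r hi h (ih2 (by omega)))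
    · exact .inr ⟨h3, fun hz => .flood (ih2 hz)⟩
  · intro i x F G hi h1 ih1 hF hG hx
    rcases ih1 hx with h | ⟨h3, h4, h5⟩
    · have h5 := (fam_T hi).1 (cb_inv hsig hI hKb h)
      have h6 : ∀ j ≤ M.ri i, F j < b := by
        intro j
        induction j with
        | zero => intro _; omega
        | succ j ih =>
          intro hj
          have h6 := ch_S_cases hsig hI (hF j hj).1
          have := ih (by omega)
          omega
      have h7 : ∀ j ≤ M.qi i, G j < b := by
        intro j
        induction j with
        | zero => intro _; omega
        | succ j ih =>
          intro hj
          have h6 := ch_S_cases hsig hI (hG j hj).1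
          have := ih (by omega)
          omega
      exact .inl (.t hi h (fun j hj => (hF j hj).2 (h6 _ hj)) (fun j hj => (hG j hj).2 (h7 _ hj)))
    · have h1 := ri_pos M i
      have h2 := qi_pos M i
      have h3' := (hF (M.ri i - 1) (by omega)).2
      have h4' := (hG (M.qi i - 1) (by omega)).2
      rw [Nat.sub_add_cancel h1] at h3'
      rw [Nat.sub_add_cancel h2] at h4'
      exact .inr ⟨h3, fun h => .flood (h3' h), fun h => .flood (h4' h)⟩
  · intro x y _ h hy; exact .flood (h hy)
  · intro x _ h _; exact .send h
  · intro x y z h1 h2 ih1 ih2 hx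
    have h5 := ch_S_cases hsig hI h1
    have h6 := ch_S_cases hsig hI h2
    exact .inl (.ginit (ih1 (by omega)) (ih2 (by omega)))
  · intro i x y z hi _ _ _ ih1 ih2 ih3 hx
    rcases ih3 hx with h | h
    · have h5 := (fam_T hi).1 (cb_inv hsig hI hKb h)
      have hy : y < b := by omega
      have h6 : Cb M I K b pG [x, y] := by
        rcases ih1 hx with h | h
        · exact h
        · exact .fg h.1 (h.2 hy)
      have h7 : Cb M I K b (pR i) [x, y] := by
        rcases ih2 hx with h | h
        · exact h
        · exact .fr hi h.1 (h.2 hy)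
      exact .inl (.gstep hi h6 h7 h)
    · exact .inr ⟨h.1, h.2.2⟩
  · intro x y _ _ h1 h2 hx; exact .inr ⟨h1 hx, h2⟩
  · intro i x y _ _ _ h1 h2 hx; exact .inr ⟨h1 hx, h2⟩
  · intro i x y z _ _ _ _ h1 h2 h3 hx; exact .inr ⟨h1 hx, h2, h3⟩
  · intro y z _ _ h1 h2 h3 hy
    exact .exS hy (hGb y z hy h1 h2) h3
  · intro y z _ _ h1 h2 h3 hy
    exact .inl (.exR (by omega) (hGb y z (by omega) h1 h2) h3)
  · intro i y z hi _ _ h1 h2 h3 hy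
    exact .inl (.exT hi (by omega) (hGb y z (by omega) h1 h2) h3)

theorem chi_cb (hsig : ∀ a ∈ I, InSig M a) (hI : ∀ a ∈ I, ∀ t ∈ a.2, tc t < K) (hKb : K ≤ b)
    {P : ℕ} {l : List ℕ} (h0 : Chi M I K P l) (hl : ∀ n ∈ l, n < b) : Cb M I K b P l := by
  have := chi_local hsig hI hKb h0
  unfold Fam at this
  split at this
  · simp at hl
    rcases this with ⟨rfl, h⟩ | ⟨rfl, h⟩
    · exact h
    · exact h hl
  · simp at hl
    rcases this with ⟨rfl, h⟩ | ⟨rfl, h⟩ | ⟨rfl, h⟩ | ⟨i, hi, rfl, h⟩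
    · exact h hl.2
    · exact h hl.2
    · rcases h hl.1 with h | h
      · exact h
      · exact .fg h.1 (h.2 hl.2)
    · rcases h hl.1 with h | h
      · exact h
      · exact .fr hi h.1 (h.2 hl.2)
  · simp at hl
    rcases this with ⟨i, hi, rfl, h⟩
    rcases h hl.1 with h | h
    · exact h
    · exact .ft hi h.1 (h.2.1 hl.2.1) (h.2.2 hl.2.2)
  · exact this.elim

/-- Every new element has a predecessor. -/
theorem chi_occ (hI : ∀ a ∈ I, ∀ t ∈ a.2, tc t < K)
    {P : ℕ} {l : List ℕ} (h : Chi M I K P l) : ∀ n ∈ l, K ≤ n → Chi M I K pS0 [n, n - K] := by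
  induction h with
  | facts a h =>
    intro n hn hk
    obtain ⟨t, ht, rfl⟩ := List.mem_map.1 hn
    have := hI a h t ht
    omega
  | s _ ih => exact ih
  | r _ _ _ ih1 ih2 => simp at ih1 ih2 ⊢; exact ⟨ih1.1, ih2.2⟩
  | @t i x f g hi _ _ _ ih1 ih2 ih3 =>
    have h1 := ri_pos M i
    have h2 := qi_pos M i
    have h3' := ih2 (M.ri i - 1) (by omega)
    have h4' := ih3 (M.qi i - 1) (by omega)
    rw [Nat.sub_add_cancel h1] at h3'
    rw [Nat.sub_add_cancel h2] at h4'
    simp at ih1 h3' h4' ⊢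
    exact ⟨ih1.1, h3'.2, h4'.2⟩
  | flood _ ih => simp at ih ⊢; exact ih.2
  | send _ ih => simp at ih ⊢; exact ih
  | ginit _ _ ih1 ih2 => simp at ih1 ih2 ⊢; exact ⟨ih1.1, ih2.2⟩
  | gstep _ _ _ _ ih1 ih2 ih3 => simp at ih1 ih3 ⊢; exact ⟨ih1.1, ih3.2.2⟩
  | fg _ _ ih1 ih2 => simp at ih1 ih2 ⊢; exact ⟨ih1, ih2⟩
  | fr _ _ _ ih1 ih2 => simp at ih1 ih2 ⊢; exact ⟨ih1, ih2⟩
  | ft _ _ _ _ ih1 ih2 ih3 => simp at ih1 ih2 ih3 ⊢; exact ⟨ih1, ih2, ih3⟩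
  | exS hy h1 h2 ih1 ih2 =>
    simp at ih1 ⊢
    exact ⟨.exS trivial h1 h2, ih1.1⟩
  | exR hy h1 h2 ih1 ih2 =>
    simp
    exact .exS trivial h1 h2
  | exT hi hy h1 h2 ih1 ih2 =>
    simp
    exact .exS trivial h1 h2

def ChRel (M : TCM) (I : Finset Atom) (K x y : ℕ) : Prop :=
  (x < K ∧ y < K) ∨ (K ≤ x ∧ (y = x ∨ Chi M I K pFlood [y] ∧ (y < K ∨ y % K = x % K)))

theorem ChRel.step (hsig : ∀ a ∈ I, InSig M a) (hI : ∀ a ∈ I, ∀ t ∈ a.2, tc t < K) {x y z : ℕ}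
    (h : ChRel M I K x y) (hS : Chi M I K pS [y, z]) : ChRel M I K x z := by
  have hz : Chi M I K pFlood [z] := .flood hS
  have hc := ch_S_cases hsig hI hS
  unfold ChRel at *
  rcases h with h | ⟨h1, h2⟩
  · left; omega
  · right
    refine ⟨h1, .inr ⟨hz, ?_⟩⟩
    rcases hc with hc | hc
    · exact .inl hc.2
    · have : y % K = z % K := by rw [hc]; simp
      rcases h2 with h2 | ⟨_, h2 | h2⟩
      · subst h2; exact .inr this.symm
      · omega
      · exact .inr (this.symm.trans h2)

theorem chi_struct (hsig : ∀ a ∈ I, InSig M a) (hI : ∀ a ∈ I, ∀ t ∈ a.2, tc t < K)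
    {P : ℕ} {l : List ℕ} (h : Chi M I K P l) :
    Fam M.p (fun x => Chi M I K pEnd [x]) (fun y => Chi M I K pFlood [y])
      (fun x y => Chi M I K pS0 [x, y])
      (fun x y => Chi M I K pS [x, y])
      (fun x y => (Chi M I K pFlood [x] ∧ Chi M I K pFlood [y]) ∨ ChRel M I K x y)
      (fun i x y => (Chi M I K pFlood [x] ∧ Chi M I K pFlood [y]) ∨ ChRel M I K x y)
      (fun i x y z => (Chi M I K pFlood [x] ∧ Chi M I K pFlood [y] ∧ Chi M I K pFlood [z]) ∨
        (ChRel M I K x y ∧ ChRel M I K x z)) P l := by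
  have hm : ∀ {P l}, Ch M I K (fun _ => False) P l → Chi M I K P l :=
    fun h => Ch.mono (by simp) h
  refine Ch.famInd hsig hI ?_ ?_ ?_ ?_ ?_ ?_ ?_ ?_ ?_ ?_ ?_ ?_ ?_ ?_ ?_ ?_ ?_ ?_ ?_ ?_ h
  · intro x _ h; exact hm h
  · intro x _ h; exact hm h
  · intro x y _ _ h; exact hm h
  · intro x y _ _ h; exact hm h
  · intro x y hx hy _; exact .inr (.inl ⟨hx, hy⟩)
  · intro i x y _ hx hy _; exact .inr (.inl ⟨hx, hy⟩)
  · intro i x y z _ hx hy hz _; exact .inr ⟨.inl ⟨hx, hy⟩, .inl ⟨hx, hz⟩⟩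
  · intro x y h _; exact .s h
  · intro i x y z hi h1 h2 ih1 ih2
    rcases ih1 with h | h
    · exact .inl ⟨h.1, .flood ih2⟩
    · exact .inr (h.step hsig hI ih2)
  · intro i x F G hi h1 ih1 hF hG
    rcases ih1 with h | ⟨h3, h4⟩
    · have h1 := ri_pos M i
      have h2 := qi_pos M i
      have h3' := (hF (M.ri i - 1) (by omega)).2
      have h4' := (hG (M.qi i - 1) (by omega)).2
      rw [Nat.sub_add_cancel h1] at h3'
      rw [Nat.sub_add_cancel h2] at h4'
      exact .inl ⟨h.1, .flood h3', .flood h4'⟩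
    · right
      have h6 : ∀ j ≤ M.ri i, ChRel M I K x (F j) := by
        intro j
        induction j with
        | zero => intro _; exact h3
        | succ j ih => intro hj; exact (ih (by omega)).step hsig hI (hF j hj).1
      have h7 : ∀ j ≤ M.qi i, ChRel M I K x (G j) := by
        intro j
        induction j with
        | zero => intro _; exact h4
        | succ j ih => intro hj; exact (ih (by omega)).step hsig hI (hG j hj).1
      exact ⟨h6 _ le_rfl, h7 _ le_rfl⟩
  · intro x y _ h; exact .flood h
  · intro x _ h; exact .send h
  · intro x y z h1 h2 ih1 ih2
    right
    refine ChRel.step hsig hI ?_ h2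
    rcases ch_S_cases hsig hI h1 with h | h
    · exact .inl h
    · right
      refine ⟨by omega, .inr ⟨.flood h1, .inr (by rw [h]; simp)⟩⟩
  · intro i x y z hi _ _ _ ih1 ih2 ih3
    rcases ih3 with h | h
    · exact .inl ⟨h.1, h.2.2⟩
    · exact .inr h.2
  · intro x y h1 h2 _ _; exact .inl ⟨h1, h2⟩
  · intro i x y _ h1 h2 _ _; exact .inl ⟨h1, h2⟩
  · intro i x y z _ h1 h2 h3 _ _ _; exact .inl ⟨h1, h2, h3⟩
  · intro y z _ h1 h2 _ _; exact .exS trivial h1 h2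
  · intro y z _ _ _ _ _
    exact .inr (.inr ⟨by omega, .inl rfl⟩)
  · intro i y z hi _ _ _ _ _
    exact .inr ⟨.inr ⟨by omega, .inl rfl⟩, .inr ⟨by omega, .inl rfl⟩⟩

end Comp



/-! ### Compression of chains -/

section Comp2
variable {M : TCM} {I : Finset Atom} {K k : ℕ} {O : Finset ℕ}

def phi (M : TCM) (I : Finset Atom) (K k : ℕ) (O : Finset ℕ) (n : ℕ) : ℕ :=
  if Chi M I K pFlood [n % K + k * K] then
    n % K + K * ((Finset.Icc 1 (n / K)).filter (fun i => n % K + i * K ∈ O)).card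
  else n

theorem flood_down (hI : ∀ a ∈ I, ∀ t ∈ a.2, tc t < K) {n : ℕ} (hn : K ≤ n)
    (h : Chi M I K pFlood [n]) : Chi M I K pFlood [n - K] :=
  .flood (.s (chi_occ hI h n (by simp) hn))

theorem flood_down' (hI : ∀ a ∈ I, ∀ t ∈ a.2, tc t < K) {c i j : ℕ} (hij : i ≤ j)
    (h : Chi M I K pFlood [c + j * K]) : Chi M I K pFlood [c + i * K] := by
  induction hij with
  | refl => exact h
  | @step j _ ih =>
    apply ih
    have := flood_down hI (n := c + (j + 1) * K) (by nlinarith) h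
    have e : c + (j + 1) * K - K = c + j * K := by rw [add_mul]; omega
    rwa [e] at this

theorem phi_old {n : ℕ} (h : n < K) : phi M I K k O n = n := by
  unfold phi
  rw [Nat.mod_eq_of_lt h, Nat.div_eq_of_lt h]
  simp

theorem phi_card (hK : 0 < K) (hO : O.card ≤ k) (c m : ℕ) :
    ((Finset.Icc 1 m).filter (fun i => c + i * K ∈ O)).card ≤ k := by
  refine le_trans (Finset.card_le_card_of_injOn (fun i => c + i * K) ?_ ?_) hO
  · intro i hi
    simp at hi ⊢
    exact hi.2
  · intro i _ j _ h
    simp at h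
    omega

theorem phi_lt (hK : 0 < K) (hO : O.card ≤ k) (hI : ∀ a ∈ I, ∀ t ∈ a.2, tc t < K) {n : ℕ}
    (hn : K ≤ n → Chi M I K pS0 [n, n - K]) : phi M I K k O n < K * (k + 1) := by
  unfold phi
  have h1 := Nat.mod_lt n hK
  split_ifs with h
  · have h2 := phi_card hK hO (n % K) (n / K)
    have := Nat.mul_le_mul_left K h2
    rw [mul_add]; omega
  · by_contra hc
    push Not at hc
    apply h
    have h3 := Nat.mod_add_div n K
    have h4 : k + 1 ≤ n / K := by
      rw [Nat.le_div_iff_mul_le hK]; rw [mul_comm]; exact hc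
    have hKn : K ≤ n := by nlinarith
    have h5 : Chi M I K pFlood [n - K] := .flood (.s (hn hKn))
    have e : n - K = n % K + (n / K - 1) * K := by
      rw [Nat.sub_mul, mul_comm (n / K), one_mul]
      have : K ≤ K * (n / K) := Nat.le_mul_of_pos_right _ (by omega)
      omega
    rw [e] at h5
    exact flood_down' hI (by omega) h5

theorem phi_flood_long (hK : 0 < K) (hO : O.card ≤ k) (hI : ∀ a ∈ I, ∀ t ∈ a.2, tc t < K) {n : ℕ}
    (h : Chi M I K pFlood [n % K + k * K]) : Chi M I K pFlood [phi M I K k O n] := by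
  unfold phi
  rw [if_pos h, mul_comm K]
  exact flood_down' hI (phi_card hK hO _ _) h

theorem phi_flood (hK : 0 < K) (hO : O.card ≤ k) (hI : ∀ a ∈ I, ∀ t ∈ a.2, tc t < K) {n : ℕ}
    (h : Chi M I K pFlood [n]) : Chi M I K pFlood [phi M I K k O n] := by
  by_cases hl : Chi M I K pFlood [n % K + k * K]
  · exact phi_flood_long hK hO hI hl
  · unfold phi; rwa [if_neg hl]

theorem phi_succ (hK : 0 < K) {y : ℕ} (hx : y + K ∈ O) :
    phi M I K k O (y + K) = phi M I K k O y + K := by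
  unfold phi
  rw [Nat.add_mod_right, Nat.add_div_right _ hK]
  split_ifs with h
  · have e : Finset.Icc 1 (y / K).succ = insert (y / K + 1) (Finset.Icc 1 (y / K)) := by
      ext i
      simp only [Finset.mem_Icc, Finset.mem_insert]
      generalize y / K = u
      omega
    have h3 := Nat.mod_add_div y K
    rw [e, Finset.filter_insert, if_pos, Finset.card_insert_of_notMem]
    · ring
    · simp
    · have : y % K + (y / K + 1) * K = y + K := by
        rw [add_mul, mul_comm (y / K)]; omega
      rwa [this]
  · rfl

theorem phi_rel (hK : 0 < K) (hO : O.card ≤ k) (hI : ∀ a ∈ I, ∀ t ∈ a.2, tc t < K) {x y : ℕ}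
    (h : ChRel M I K x y) :
    (phi M I K k O x = x ∧ phi M I K k O y = y) ∨
      (Chi M I K pFlood [phi M I K k O x] ∧ Chi M I K pFlood [phi M I K k O y] ∧
        Chi M I K pFlood [x % K + k * K]) := by
  rcases h with h | ⟨h1, h2⟩
  · left; exact ⟨phi_old h.1, phi_old h.2⟩
  · by_cases hl : Chi M I K pFlood [x % K + k * K]
    · right
      have h3 : Chi M I K pFlood [phi M I K k O x] := phi_flood_long hK hO hI hl
      refine ⟨h3, ?_, hl⟩
      rcases h2 with h2 | h2
      · rw [h2]; exact h3
      · exact phi_flood hK hO hI h2.1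
    · left
      have h3 : phi M I K k O x = x := by unfold phi; rw [if_neg hl]
      refine ⟨h3, ?_⟩
      rcases h2 with h2 | ⟨_, h2 | h2⟩
      · rw [h2]; exact h3
      · exact phi_old h2
      · unfold phi; rw [h2, if_neg hl]

theorem phi_rel' (hK : 0 < K) (hO : O.card ≤ k) (hI : ∀ a ∈ I, ∀ t ∈ a.2, tc t < K) {x y z : ℕ}
    (h : ChRel M I K x y) (h' : ChRel M I K x z) :
    (phi M I K k O x = x ∧ phi M I K k O y = y ∧ phi M I K k O z = z) ∨
      (Chi M I K pFlood [phi M I K k O x] ∧ Chi M I K pFlood [phi M I K k O y] ∧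
        Chi M I K pFlood [phi M I K k O z]) := by
  by_cases hxK : x < K
  · have hy : y < K := by
      rcases h with h | h
      · exact h.2
      · omega
    have hz : z < K := by
      rcases h' with h | h
      · exact h.2
      · omega
    left; exact ⟨phi_old hxK, phi_old hy, phi_old hz⟩
  · by_cases hl : Chi M I K pFlood [x % K + k * K]
    · right
      have h3 : Chi M I K pFlood [phi M I K k O x] := phi_flood_long hK hO hI hl
      refine ⟨h3, ?_, ?_⟩
      · rcases h with h | ⟨_, h2 | h2⟩
        · omega
        · rw [h2]; exact h3
        · exact phi_flood hK hO hI h2.1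
      · rcases h' with h | ⟨_, h2 | h2⟩
        · omega
        · rw [h2]; exact h3
        · exact phi_flood hK hO hI h2.1
    · left
      rcases phi_rel hK hO hI h with h1 | h1
      · rcases phi_rel hK hO hI h' with h2 | h2
        · exact ⟨h1.1, h1.2, h2.2⟩
        · exact absurd h2.2.2 hl
      · exact absurd h1.2.2 hl

theorem phi_S0 (hK : 0 < K) (hO : O.card ≤ k) (hI : ∀ a ∈ I, ∀ t ∈ a.2, tc t < K) {y : ℕ}
    (hx : y + K ∈ O) (h : Chi M I K pS0 [y + K, y]) :
    Chi M I K pS0 [phi M I K k O (y + K), phi M I K k O y] := by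
  by_cases hl : Chi M I K pFlood [y % K + k * K]
  · have h3 : Chi M I K pFlood [phi M I K k O (y + K)] :=
      phi_flood_long hK hO hI (by rwa [Nat.add_mod_right])
    rw [phi_succ hK hx] at h3 ⊢
    have := chi_occ hI h3 _ (List.mem_singleton.2 rfl) (by omega)
    simpa using this
  · unfold phi; rw [Nat.add_mod_right, if_neg hl, if_neg hl]; exact h

theorem chi_phi (hK : 0 < K) (hO : O.card ≤ k) (hsig : ∀ a ∈ I, InSig M a)
    (hI : ∀ a ∈ I, ∀ t ∈ a.2, tc t < K) {P : ℕ} {l : List ℕ} (h : Chi M I K P l)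
    (hl : ∀ n ∈ l, n < K ∨ n ∈ O) : Chi M I K P (l.map (phi M I K k O)) := by
  have := chi_struct hsig hI h
  unfold Fam at this
  split at this
  · rcases this with ⟨rfl, h⟩ | ⟨rfl, h⟩
    · have := ch_End_lt hsig hI h
      simpa [phi_old this] using h
    · exact phi_flood hK hO hI h
  · simp only [List.map_cons, List.map_nil]
    simp only [List.mem_cons, List.not_mem_nil, or_false, forall_eq_or_imp, forall_eq] at hl
    rcases this with ⟨rfl, h⟩ | ⟨rfl, h⟩ | ⟨rfl, h'⟩ | ⟨i, hi, rfl, h'⟩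
    · rcases ch_S0_cases hsig hI h with h1 | h1
      · rwa [phi_old h1.1, phi_old h1.2]
      · subst h1
        exact phi_S0 hK hO hI (by rcases hl.1 with h | h; omega; exact h) h
    · rcases ch_S_cases hsig hI h with h1 | h1
      · rwa [phi_old h1.1, phi_old h1.2]
      · subst h1
        refine .s (phi_S0 hK hO hI (by rcases hl.1 with h | h; omega; exact h) ?_)
        have := chi_occ hI h _ List.mem_cons_self (by omega)
        simpa using this
    · rcases h' with h' | h'
      · exact .fg (phi_flood hK hO hI h'.1) (phi_flood hK hO hI h'.2)
      · rcases phi_rel (k := k) (O := O) hK hO hI h' with h2 | h2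
        · rwa [h2.1, h2.2]
        · exact .fg h2.1 h2.2.1
    · rcases h' with h' | h'
      · exact .fr hi (phi_flood hK hO hI h'.1) (phi_flood hK hO hI h'.2)
      · rcases phi_rel (k := k) (O := O) hK hO hI h' with h2 | h2
        · rwa [h2.1, h2.2]
        · exact .fr hi h2.1 h2.2.1
  · simp only [List.map_cons, List.map_nil]
    rcases this with ⟨i, hi, rfl, h'⟩
    rcases h' with h' | h'
    · exact .ft hi (phi_flood hK hO hI h'.1) (phi_flood hK hO hI h'.2.1)
        (phi_flood hK hO hI h'.2.2)
    · rcases phi_rel' (k := k) (O := O) hK hO hI h'.1 h'.2 with h2 | h2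
      · rwa [h2.1, h2.2.1, h2.2.2]
      · exact .ft hi h2.1 h2.2.1 h2.2.2
  · exact this.elim

end Comp2

theorem ev_phi {M : TCM} {I : Finset Atom} {K k : ℕ} {O : Finset ℕ} (s : Var → ℕ) (l : List FTerm)
    (hq : ∀ t ∈ l, tc t < K) :
    (l.map (ev s)).map (phi M I K k O) = l.map (ev fun v => phi M I K k O (s v)) := by
  rw [List.map_map]
  apply List.map_congr_left
  intro t ht
  rcases t with c | v
  · exact phi_old (hq _ ht)
  · rfl

/-- The query can be checked in the bounded chase. -/
theorem chi_bounded {M : TCM} {I q : Finset Atom} {K k : ℕ} (hK : 0 < K)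
    (hsig : ∀ a ∈ I, InSig M a)
    (hI : ∀ a ∈ I, ∀ t ∈ a.2, tc t < K) (hq : ∀ a ∈ q, ∀ t ∈ a.2, tc t < K)
    (hk : (varsF q).card ≤ k) :
    (∃ s : Var → ℕ, ∀ a ∈ q, Chi M I K a.1 (a.2.map (ev s))) ↔
      ∃ s : Var → ℕ, (∀ v, s v < K * (k + 1)) ∧
        ∀ a ∈ q, Cb M I K (K * (k + 1)) a.1 (a.2.map (ev s)) := by
  constructor
  · rintro ⟨s, hs⟩
    set O := (varsF q).image s with hOdef
    have hO : O.card ≤ k := Finset.card_image_le.trans hk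
    have hb : 0 < K * (k + 1) := by positivity
    have hKb : K ≤ K * (k + 1) := Nat.le_mul_of_pos_right _ (by omega)
    have hv : ∀ v ∈ varsF q, phi M I K k O (s v) < K * (k + 1) := by
      intro v hv
      apply phi_lt hK hO hI
      rw [mem_varsF] at hv
      obtain ⟨a, ha, hv⟩ := hv
      exact chi_occ hI (hs a ha) _ (List.mem_map.2 ⟨_, hv, rfl⟩)
    refine ⟨fun v => if v ∈ varsF q then phi M I K k O (s v) else 0, ?_, ?_⟩
    · intro v
      dsimp only
      split_ifs with h
      · exact hv v h
      · exact hb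
    · intro a ha
      have e : a.2.map (ev fun v => if v ∈ varsF q then phi M I K k O (s v) else 0) =
          (a.2.map (ev s)).map (phi M I K k O) := by
        rw [ev_phi _ _ (hq a ha)]
        apply List.map_congr_left
        intro t ht
        rcases t with c | v
        · rfl
        · simp only [ev]
          rw [if_pos]
          rw [mem_varsF]
          exact ⟨a, ha, ht⟩
      rw [e]
      have hl : ∀ n ∈ a.2.map (ev s), n < K ∨ n ∈ O := by
        intro n hn
        obtain ⟨t, ht, rfl⟩ := List.mem_map.1 hn
        rcases t with c | v
        · exact .inl (hq a ha _ ht)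
        · right
          refine Finset.mem_image.2 ⟨v, ?_, rfl⟩
          rw [mem_varsF]
          exact ⟨a, ha, ht⟩
      refine chi_cb hsig hI hKb (chi_phi hK hO hsig hI (hs a ha) hl) ?_
      intro n hn
      obtain ⟨m, hm, rfl⟩ := List.mem_map.1 hn
      exact phi_lt hK hO hI (chi_occ hI (hs a ha) _ hm)
  · rintro ⟨s, _, hs⟩
    exact ⟨s, fun a ha => Ch.mono (by simp) (hs a ha)⟩



/-! ### The finite check -/

def vval (N n : ℕ) (v : Var) : ℕ := n / N ^ (Encodable.encode v) % N

def tb (a P : ℕ) (l : List ℕ) : Prop := a / 2 ^ (Encodable.encode (P, l)) % 2 = 1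

def holdsN (N a n : ℕ) (L : List Atom) : Prop :=
  ∀ x ∈ L, tb a x.1 (x.2.map (ev (vval N n)))

def okRule (N a : ℕ) (l : LRule) : Prop :=
  ∀ n < N ^ (Encodable.encode l + 1), holdsN N a n l.1 → holdsN N a n l.2

def okEx (K b N a : ℕ) (l : LRule) : Prop :=
  ∀ n < N ^ (Encodable.encode l + 1), vval N n (Sum.inl 1) < b →
    vval N n (Sum.inl 0) = vval N n (Sum.inl 1) + K → holdsN N a n l.1 → holdsN N a n l.2

def DecN (K b N W : ℕ) (rules : List LRule) (ex : LRule) (lI lq : List Atom) : Prop :=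
  ∀ a < 2 ^ W, ((∀ x ∈ lI, tb a x.1 (x.2.map tc)) ∧ (∀ l ∈ rules, okRule N a l) ∧
    okEx K b N a ex) → ∃ n < N ^ (Encodable.encode lq + 1), holdsN N a n lq

theorem exists_digits (N : ℕ) (V : ℕ) : ∀ f : ℕ → ℕ, (∀ i, f i < N) →
    ∃ n < N ^ V, ∀ i < V, n / N ^ i % N = f i := by
  induction V with
  | zero => intro f _; exact ⟨0, by simp, by simp⟩
  | succ V ih =>
    intro f hf
    obtain ⟨n, hn, h⟩ := ih (fun i => f (i + 1)) (fun i => hf _)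
    have h0 := hf 0
    have hN : 0 < N := by omega
    refine ⟨f 0 + N * n, ?_, ?_⟩
    · rw [pow_succ, mul_comm (N ^ V)]
      calc f 0 + N * n < N + N * n := by omega
        _ = N * (n + 1) := by ring
        _ ≤ N * N ^ V := Nat.mul_le_mul_left _ hn
    · intro i hi
      rcases i with _ | i
      · simp [Nat.mod_eq_of_lt h0]
      · rw [pow_succ, mul_comm (N ^ i), ← Nat.div_div_eq_div_mul, Nat.add_mul_div_left _ _ hN,
          Nat.div_eq_of_lt h0, zero_add]
        exact h i (by omega)

theorem enc_le_list {α : Type*} [Encodable α] {l : List α} {a : α} (h : a ∈ l) :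
    Encodable.encode a ≤ Encodable.encode l := by
  induction l with
  | nil => simp at h
  | cons b l ih =>
    rw [Encodable.encode_list_cons]
    rcases List.mem_cons.1 h with rfl | h
    · exact (Nat.left_le_pair _ _).trans (Nat.le_succ _)
    · exact (ih h).trans ((Nat.right_le_pair _ _).trans (Nat.le_succ _))

theorem enc_fst_le {α β : Type*} [Encodable α] [Encodable β] (x : α × β) :
    Encodable.encode x.1 ≤ Encodable.encode x := Nat.left_le_pair _ _

theorem enc_snd_le {α β : Type*} [Encodable α] [Encodable β] (x : α × β) :
    Encodable.encode x.2 ≤ Encodable.encode x := Nat.right_le_pair _ _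

theorem enc_term_le {L : List Atom} {a : Atom} {t : FTerm} (ha : a ∈ L) (ht : t ∈ a.2) :
    tc t ≤ Encodable.encode L :=
  (enc_le_list ht).trans ((enc_snd_le a).trans (enc_le_list ha))

theorem enc_var_le {L : List Atom} {a : Atom} {v : Var} (ha : a ∈ L) (hv : Sum.inr v ∈ a.2) :
    Encodable.encode v ≤ Encodable.encode L := by
  refine le_trans ?_ (enc_term_le ha hv)
  have : tc (Sum.inr v) = 2 * Encodable.encode v + 1 := rfl
  omega

theorem holds_congr {A : ℕ → List ℕ → Prop} {s s' : Var → ℕ} {L : List Atom}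
    (h : ∀ v, Encodable.encode v ≤ Encodable.encode L → s v = s' v) (hs : HoldsL A s L) :
    HoldsL A s' L := by
  intro a ha
  have e : a.2.map (ev s') = a.2.map (ev s) := by
    apply List.map_congr_left
    intro t ht
    rcases t with c | v
    · rfl
    · exact (h v (enc_var_le ha ht)).symm
  rw [e]
  exact hs a ha

theorem exists_val {N V : ℕ} {s : Var → ℕ} (hs : ∀ v, s v < N) :
    ∃ n < N ^ V, ∀ v, Encodable.encode v < V → vval N n v = s v := by
  have h0 : 0 < N := lt_of_le_of_lt (Nat.zero_le _) (hs (Sum.inl 0))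
  obtain ⟨n, hn, h⟩ := exists_digits N V
    (fun i => match Encodable.decode (α := Var) i with | some v => s v | none => 0) (by
      intro i
      split
      · exact hs _
      · exact h0)
  refine ⟨n, hn, fun v hv => ?_⟩
  have := h _ hv
  simpa [vval] using this

theorem vval_lt {N n : ℕ} (h : 0 < N) (v : Var) : vval N n v < N := Nat.mod_lt _ h

theorem okRule_iff {N a : ℕ} (hN : 0 < N) (l : LRule) :
    okRule N a l ↔ Sat (fun x => x < N) (tb a) l := by
  constructor
  · intro h s hs hb
    obtain ⟨n, hn, hv⟩ := exists_val (V := Encodable.encode l + 1) hs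
    have h1 := enc_fst_le l
    have h2 := enc_snd_le l
    refine holds_congr (s := vval N n) (fun v hv' => hv v (by omega)) (h n hn ?_)
    exact holds_congr (s' := vval N n) (fun v hv' => (hv v (by omega)).symm) hb
  · intro h n _ hb
    exact h _ (fun v => vval_lt hN v) hb

theorem okEx_iff {K b N a : ℕ} (hN : 0 < N) (p : ℕ) :
    okEx K b N a (lEx p) ↔ SatEx K (fun x => x < N) (fun x => x < b) (tb a) (lEx p) := by
  constructor
  · intro h s hs h1 h2 hb
    obtain ⟨n, hn, hv⟩ := exists_val (V := Encodable.encode (lEx p) + 1) hs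
    have e1 := enc_fst_le (lEx p)
    have e2 := enc_snd_le (lEx p)
    have e3 : Encodable.encode (Sum.inl 1 : Var) ≤ Encodable.encode (lEx p).1 :=
      enc_var_le (a := (pG, [vt 1, vt 2])) (by simp [lEx]) (by simp [vt])
    have e4 : Encodable.encode (Sum.inl 0 : Var) ≤ Encodable.encode (lEx p).2 :=
      enc_var_le (a := (pS0, [vt 0, vt 1])) (by simp [lEx]) (by simp [vt])
    have e5 := hv (Sum.inl 1) (by omega)
    have e6 := hv (Sum.inl 0) (by omega)
    refine holds_congr (s := vval N n) (fun v hv' => hv v (by omega))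
      (h n hn (by rw [e5]; exact h1) (by rw [e5, e6]; exact h2) ?_)
    exact holds_congr (s' := vval N n) (fun v hv' => (hv v (by omega)).symm) hb
  · intro h n _ h1 h2 hb
    exact h _ (fun v => vval_lt hN v) h1 h2 hb

theorem pair_mono {a b c d : ℕ} (h : a ≤ c) (h' : b ≤ d) : Nat.pair a b ≤ Nat.pair c d := by
  rcases h.lt_or_eq with h | rfl
  · rcases h'.lt_or_eq with h' | rfl
    · exact ((Nat.pair_lt_pair_left _ h).trans (Nat.pair_lt_pair_right _ h')).le
    · exact (Nat.pair_lt_pair_left _ h).le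
  · rcases h'.lt_or_eq with h' | rfl
    · exact (Nat.pair_lt_pair_right _ h').le
    · exact le_rfl

def bigW (p N : ℕ) : ℕ := Encodable.encode (6 + 2 * p, [N, N, N]) + 1

theorem cb_code_lt {M : TCM} {I : Finset Atom} {K b : ℕ}
    (hsig : ∀ a ∈ I, InSig M a) (hI : ∀ a ∈ I, ∀ t ∈ a.2, tc t < K) (hKb : K ≤ b) (hK : 0 < K)
    {P : ℕ} {l : List ℕ} (h : Cb M I K b P l) :
    Encodable.encode (P, l) < bigW M.p (b + K) := by
  have hN : ∀ n ∈ l, n < b + K := by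
    refine (Ch.sub (D := fun n => n < b + K) (gen_hc (by omega) (ri_pos M) (qi_pos M)
      (ch_gen M I K _ _ (ri_pos M) (qi_pos M))) ?_ ?_ h).1
    · intro a ha t ht
      have := hI a ha t ht
      omega
    · intro y hy _
      omega
  have h1 : P ≤ 6 + 2 * M.p ∧ Encodable.encode l ≤ Encodable.encode [b + K, b + K, b + K] := by
    have := ch_basic hsig hI h
    unfold Fam at this
    split at this
    · simp at hN
      refine ⟨?_, ?_⟩
      · simp only [pEnd, pFlood] at this; omega
      · simp only [Encodable.encode_list_cons, Encodable.encode_nat]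
        exact Nat.succ_le_succ (pair_mono (by omega) (by simp))
    · simp at hN
      refine ⟨?_, ?_⟩
      · simp only [pS0, pS, pG, pR] at this
        rcases this with h | h | h | ⟨i, hi, h, _⟩ <;> omega
      · simp only [Encodable.encode_list_cons, Encodable.encode_nat]
        exact Nat.succ_le_succ (pair_mono (by omega) (Nat.succ_le_succ (pair_mono (by omega)
          (by simp))))
    · simp at hN
      refine ⟨?_, ?_⟩
      · simp only [pT] at this
        rcases this with ⟨i, hi, h, _⟩; omega
      · simp only [Encodable.encode_list_cons, Encodable.encode_nat]
        exact Nat.succ_le_succ (pair_mono (by omega) (Nat.succ_le_succ (pair_mono (by omega)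
          (Nat.succ_le_succ (pair_mono (by omega) le_rfl)))))
    · exact this.elim
  unfold bigW
  exact Nat.lt_succ_of_le (pair_mono h1.1 h1.2)

theorem card_vars {q : Finset Atom} {K : ℕ} (hq : ∀ a ∈ q, ∀ t ∈ a.2, tc t < K) :
    (varsF q).card ≤ K := by
  have : (varsF q).card ≤ (Finset.range K).card := by
    refine Finset.card_le_card_of_injOn (fun v => tc (Sum.inr v)) ?_ ?_
    · intro v hv
      obtain ⟨a, ha, hv⟩ := mem_varsF.1 hv
      simpa using hq a ha _ hv
    · intro v _ w _ h
      have := Encodable.encode_injective h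
      simpa using this
  simpa using this

theorem dec_correct {M : TCM} {I q : Finset Atom} {lI lq : List Atom} {K : ℕ} (hK : 0 < K)
    (hsig : ∀ a ∈ I, InSig M a)
    (eI : ∀ a, a ∈ lI ↔ a ∈ I) (eq : ∀ a, a ∈ lq ↔ a ∈ q)
    (hI : ∀ a ∈ I, ∀ t ∈ a.2, tc t < K) (hq : ∀ a ∈ q, ∀ t ∈ a.2, tc t < K) :
    DecN K (K * (K + 1)) (K * (K + 1) + K) (bigW M.p (K * (K + 1) + K)) (rulesL M.p M.ri M.qi)
      (lEx M.p) lI lq ↔ Entails (RM M) (I : Set Atom) (q : Set Atom) := by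
  rw [entails_iff hK hI hq]
  have hKb : K ≤ K * (K + 1) := Nat.le_mul_of_pos_right _ (by omega)
  have hcb := chi_bounded (M := M) hK hsig hI hq (card_vars hq)
  generalize K * (K + 1) = b at *
  have hN : 0 < b + K := by omega
  constructor
  · intro h
    obtain ⟨a, ha, hbits⟩ := exists_digits 2 (bigW M.p (b + K))
      (fun i => if ∃ P l, i = Encodable.encode (P, l) ∧ Cb M I K b P l then 1 else 0) (by
        intro i; split_ifs <;> omega)
    have hA : ∀ P l, tb a P l ↔ Cb M I K b P l := by
      intro P l
      constructor
      · intro ht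
        unfold tb at ht
        by_cases hlt : Encodable.encode (P, l) < bigW M.p (b + K)
        · rw [hbits _ hlt] at ht
          split_ifs at ht with hc
          · obtain ⟨P', l', he, hc⟩ := hc
            have := Encodable.encode_injective he
            simp only [Prod.mk.injEq] at this
            rw [this.1, this.2]
            exact hc
        · have : 2 ^ bigW M.p (b + K) ≤ 2 ^ Encodable.encode (P, l) :=
            Nat.pow_le_pow_right (by omega) (by omega)
          rw [Nat.div_eq_of_lt (by omega)] at ht
          simp at ht
      · intro hc
        unfold tb
        rw [hbits _ (cb_code_lt hsig hI hKb hK hc), if_pos ⟨P, l, rfl, hc⟩]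
    have hA' : tb a = Cb M I K b := by
      funext P l
      exact propext (hA P l)
    have G := ch_gen M I K (fun x => x < b + K) (fun x => x < b) (ri_pos M) (qi_pos M)
    have hok := h a ha ⟨?_, ?_, ?_⟩
    · obtain ⟨n, _, hn⟩ := hok
      refine ⟨vval (b + K) n, fun x hx => ?_⟩
      have := hn x ((eq x).2 hx)
      rw [hA] at this
      exact Ch.mono (by simp) this
    · intro x hx
      rw [hA]
      exact G.facts x ((eI x).1 hx)
    · intro l hl
      rw [okRule_iff hN, hA']
      exact G.dat l hl
    · rw [okEx_iff hN, hA']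
      exact G.ex
  · intro h a _ hok
    obtain ⟨s, hs, hq'⟩ := hcb.1 h
    have G : Gen M I K (fun x => x < b + K) (fun x => x < b) (tb a) := by
      refine ⟨fun x hx => hok.1 x ((eI x).2 hx), fun l hl => ?_, ?_⟩
      · exact (okRule_iff hN l).1 (hok.2.1 l hl)
      · exact (okEx_iff hN _).1 hok.2.2
    have hsub : ∀ P l, Cb M I K b P l → tb a P l := by
      intro P l hc
      refine (Ch.sub (gen_hc hN (ri_pos M) (qi_pos M) G) ?_ ?_ hc).2
      · intro x hx t ht
        have := hI x hx t ht
        omega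
      · intro y hy _
        omega
    have hs' : ∀ v, s v < b + K := fun v => by have := hs v; omega
    obtain ⟨n, hn, hv⟩ := exists_val (V := Encodable.encode lq + 1) hs'
    refine ⟨n, hn, ?_⟩
    refine holds_congr (A := tb a) (s := s) (fun v hv' => (hv v (by omega)).symm) ?_
    intro x hx
    exact hsub _ _ (hq' x ((eq x).1 hx))



/-! ### Primitive recursiveness -/

section PR
variable {α β σ : Type*} [Primcodable α] [Primcodable β] [Primcodable σ]

theorem pforall_list {f : α → List β} {R : α → β → Prop} (hf : Primrec f)
    (hR : PrimrecPred fun x : α × β => R x.1 x.2) : PrimrecPred fun a => ∀ b ∈ f a, R a b := by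
  have h1 : PrimrecRel (fun (b : β) (a : α) => R a b) :=
    hR.comp (Primrec.pair Primrec.snd Primrec.fst)
  exact h1.forall_mem_list.comp hf Primrec.id

theorem pforall_lt {f : α → ℕ} {R : α → ℕ → Prop} (hf : Primrec f)
    (hR : PrimrecPred fun x : α × ℕ => R x.1 x.2) : PrimrecPred fun a => ∀ b < f a, R a b := by
  refine (pforall_list (Primrec.list_range.comp hf) hR).of_eq fun a => ?_
  simp

theorem pexists_lt {f : α → ℕ} {R : α → ℕ → Prop} (hf : Primrec f)
    (hR : PrimrecPred fun x : α × ℕ => R x.1 x.2) : PrimrecPred fun a => ∃ b < f a, R a b := by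
  refine (pforall_lt hf (R := fun a b => ¬ R a b) hR.not).not.of_eq fun a => ?_
  simp

theorem pimp {p q : α → Prop} (hp : PrimrecPred p) (hq : PrimrecPred q) :
    PrimrecPred fun a => p a → q a := by
  refine (hp.not.or hq).of_eq fun a => ?_
  tauto

theorem pr_find {f : α → List β} {R : α → β → Bool} (hf : Primrec f)
    (hR : Primrec fun x : α × β => R x.1 x.2) : Primrec fun a => (f a).find? (R a) := by
  have h1 : PrimrecRel (fun (b : β) (a : α) => R a b = true) :=
    Primrec.eq.comp (hR.comp (Primrec.pair Primrec.snd Primrec.fst)) (Primrec.const true)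
  have := Primrec.list_head?.comp (h1.listFilter.comp hf Primrec.id)
  refine this.of_eq fun a => ?_
  simp [List.head?_filter]

theorem pr_decide {p : α → Prop} {d : DecidablePred p} (hp : PrimrecPred p) :
    Primrec fun a => @decide (p a) (d a) := hp.decide

theorem pr_pow {f g : α → ℕ} (hf : Primrec f) (hg : Primrec g) : Primrec fun a => f a ^ g a :=
  (Primrec₂.unpaired'.1 Nat.Primrec.pow).comp hf hg

theorem p_eq {f g : α → β} (hf : Primrec f) (hg : Primrec g) : PrimrecPred fun a => f a = g a :=
  Primrec.eq.comp hf hg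

theorem p_dvd {f g : α → ℕ} (hf : Primrec f) (hg : Primrec g) :
    PrimrecPred fun a => f a ∣ g a := by
  refine (p_eq (Primrec.nat_mod.comp hg hf) (Primrec.const 0)).of_eq fun a => ?_
  exact (Nat.dvd_iff_mod_eq_zero).symm

theorem pr_add {f g : α → ℕ} (hf : Primrec f) (hg : Primrec g) : Primrec fun a => f a + g a :=
  Primrec.nat_add.comp hf hg
theorem pr_mul {f g : α → ℕ} (hf : Primrec f) (hg : Primrec g) : Primrec fun a => f a * g a :=
  Primrec.nat_mul.comp hf hg
theorem pr_div {f g : α → ℕ} (hf : Primrec f) (hg : Primrec g) : Primrec fun a => f a / g a :=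
  Primrec.nat_div.comp hf hg
theorem pr_mod {f g : α → ℕ} (hf : Primrec f) (hg : Primrec g) : Primrec fun a => f a % g a :=
  Primrec.nat_mod.comp hf hg

theorem pr_vval {N n : α → ℕ} {v : α → Var} (hN : Primrec N) (hn : Primrec n) (hv : Primrec v) :
    Primrec fun a => vval (N a) (n a) (v a) :=
  pr_mod (pr_div hn (pr_pow hN (Primrec.encode.comp hv))) hN

theorem pr_ev {N n : α → ℕ} {t : α → FTerm} (hN : Primrec N) (hn : Primrec n) (ht : Primrec t) :
    Primrec fun a => ev (vval (N a) (n a)) (t a) := by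
  have : Primrec fun a => Sum.casesOn (motive := fun _ => ℕ) (t a)
      (fun c : ℕ => Encodable.encode (Sum.inl c : FTerm)) (fun v : Var => vval (N a) (n a) v) :=
    Primrec.sumCasesOn ht
      (show Primrec fun x : α × ℕ => Encodable.encode (Sum.inl x.2 : FTerm) from
        Primrec.encode.comp (Primrec.sumInl.comp Primrec.snd))
      (show Primrec fun x : α × Var => vval (N x.1) (n x.1) x.2 from
        pr_vval (hN.comp Primrec.fst) (hn.comp Primrec.fst) Primrec.snd)
  refine this.of_eq fun a => ?_
  rcases t a with c | v <;> rfl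

theorem p_tb {a P : α → ℕ} {l : α → List ℕ} (ha : Primrec a) (hP : Primrec P) (hl : Primrec l) :
    PrimrecPred fun x => tb (a x) (P x) (l x) :=
  p_eq (pr_mod (pr_div ha (pr_pow (Primrec.const 2) (Primrec.encode.comp (hP.pair hl))))
    (Primrec.const 2)) (Primrec.const 1)

theorem p_holds {N a n : α → ℕ} {L : α → List Atom} (hN : Primrec N) (ha : Primrec a)
    (hn : Primrec n) (hL : Primrec L) : PrimrecPred fun x => holdsN (N x) (a x) (n x) (L x) := by
  refine pforall_list hL (R := fun x b => tb (a x) b.1 (b.2.map (ev (vval (N x) (n x))))) ?_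
  refine p_tb (ha.comp Primrec.fst) (Primrec.fst.comp Primrec.snd) ?_
  refine Primrec.list_map (Primrec.snd.comp Primrec.snd) ?_
  exact pr_ev (hN.comp (Primrec.fst.comp Primrec.fst)) (hn.comp (Primrec.fst.comp Primrec.fst))
    Primrec.snd

theorem p_okRule {N a : α → ℕ} {l : α → LRule} (hN : Primrec N) (ha : Primrec a)
    (hl : Primrec l) : PrimrecPred fun x => okRule (N x) (a x) (l x) := by
  refine pforall_lt (R := fun x n => holdsN (N x) (a x) n (l x).1 → holdsN (N x) (a x) n (l x).2)
    (pr_pow hN (pr_add (Primrec.encode.comp hl) (Primrec.const 1))) (pimp ?_ ?_)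
  · exact p_holds (hN.comp Primrec.fst) (ha.comp Primrec.fst) Primrec.snd
      (Primrec.fst.comp (hl.comp Primrec.fst))
  · exact p_holds (hN.comp Primrec.fst) (ha.comp Primrec.fst) Primrec.snd
      (Primrec.snd.comp (hl.comp Primrec.fst))

theorem p_okEx {K b N a : α → ℕ} {l : α → LRule} (hK : Primrec K) (hb : Primrec b)
    (hN : Primrec N) (ha : Primrec a)
    (hl : Primrec l) : PrimrecPred fun x => okEx (K x) (b x) (N x) (a x) (l x) := by
  have hv : ∀ i, Primrec fun y : α × ℕ => vval (N y.1) y.2 (Sum.inl i) := fun i =>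
    pr_vval (hN.comp Primrec.fst) Primrec.snd (Primrec.const _)
  refine pforall_lt (R := fun x n => vval (N x) n (Sum.inl 1) < b x →
    vval (N x) n (Sum.inl 0) = vval (N x) n (Sum.inl 1) + K x →
    holdsN (N x) (a x) n (l x).1 → holdsN (N x) (a x) n (l x).2)
    (pr_pow hN (pr_add (Primrec.encode.comp hl) (Primrec.const 1)))
    (pimp ?_ (pimp ?_ (pimp ?_ ?_)))
  · exact Primrec.nat_lt.comp (hv 1) (hb.comp Primrec.fst)
  · exact p_eq (hv 0) (pr_add (hv 1) (hK.comp Primrec.fst))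
  · exact p_holds (hN.comp Primrec.fst) (ha.comp Primrec.fst) Primrec.snd
      (Primrec.fst.comp (hl.comp Primrec.fst))
  · exact p_holds (hN.comp Primrec.fst) (ha.comp Primrec.fst) Primrec.snd
      (Primrec.snd.comp (hl.comp Primrec.fst))

theorem p_DecN {K b N W : α → ℕ} {rules : α → List LRule} {ex : α → LRule}
    {lI lq : α → List Atom} (hK : Primrec K) (hb : Primrec b) (hN : Primrec N) (hW : Primrec W)
    (hr : Primrec rules) (he : Primrec ex) (hI : Primrec lI) (hq : Primrec lq) :
    PrimrecPred fun x => DecN (K x) (b x) (N x) (W x) (rules x) (ex x) (lI x) (lq x) := by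
  refine pforall_lt (R := fun x a => ((∀ y ∈ lI x, tb a y.1 (y.2.map tc)) ∧
    (∀ l ∈ rules x, okRule (N x) a l) ∧
    okEx (K x) (b x) (N x) a (ex x)) → ∃ n < (N x) ^ (Encodable.encode (lq x) + 1),
      holdsN (N x) a n (lq x))
    (pr_pow (Primrec.const 2) hW) (pimp (.and ?_ (.and ?_ ?_)) ?_)
  · refine pforall_list (α := α × ℕ) (f := fun x => lI x.1)
      (R := fun x y => tb x.2 y.1 (y.2.map tc)) (hI.comp Primrec.fst) ?_
    refine p_tb (Primrec.snd.comp Primrec.fst) (Primrec.fst.comp Primrec.snd) ?_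
    exact Primrec.list_map (Primrec.snd.comp Primrec.snd) (Primrec.encode.comp Primrec.snd)
  · exact pforall_list (α := α × ℕ) (f := fun x => rules x.1)
      (R := fun x l => okRule (N x.1) x.2 l) (hr.comp Primrec.fst)
      (p_okRule (hN.comp (Primrec.fst.comp Primrec.fst)) (Primrec.snd.comp Primrec.fst)
        Primrec.snd)
  · exact p_okEx (hK.comp Primrec.fst) (hb.comp Primrec.fst) (hN.comp Primrec.fst) Primrec.snd
      (he.comp Primrec.fst)
  · exact pexists_lt (α := α × ℕ) (f := fun x => N x.1 ^ (Encodable.encode (lq x.1) + 1))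
      (R := fun x n => holdsN (N x.1) x.2 n (lq x.1))
      (pr_pow (hN.comp Primrec.fst) (pr_add (Primrec.encode.comp (hq.comp Primrec.fst))
        (Primrec.const 1)))
      (p_holds (hN.comp (Primrec.fst.comp Primrec.fst)) (Primrec.snd.comp Primrec.fst)
        Primrec.snd (hq.comp (Primrec.fst.comp Primrec.fst)))

end PR



/-! ### Primitive recursiveness of the rule set -/

instance instPrimcodableIntAux : Primcodable ℤ := Primcodable.ofEquiv ℕ Equiv.intEquivNat

theorem p_prime : PrimrecPred fun n : ℕ => n.Prime := by
  have h : PrimrecPred fun n : ℕ => 2 ≤ n ∧ ∀ m < n, m ∣ n → m = 1 :=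
    (Primrec.nat_le.comp (Primrec.const 2) Primrec.id).and
      (pforall_lt (R := fun n m => m ∣ n → m = 1) Primrec.id
        (pimp (p_dvd Primrec.snd Primrec.fst) (p_eq Primrec.snd (Primrec.const 1))))
  exact h.of_eq fun n => Nat.prime_def_lt.symm

theorem nextPrime_find (n : ℕ) : (List.range (2 * n + 3)).find?
    (fun k => decide (n + 1 ≤ k ∧ k.Prime)) = some (nextPrime n) := by
  have hs := Nat.find_spec (Nat.exists_infinite_primes (n + 1))
  have hlt : nextPrime n < 2 * n + 3 := by
    rcases Nat.eq_zero_or_pos n with rfl | hn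
    · have : nextPrime 0 ≤ 2 := Nat.find_min' _ ⟨by norm_num, Nat.prime_two⟩
      omega
    · obtain ⟨q, hq, h1, h2⟩ := Nat.exists_prime_lt_and_le_two_mul n hn.ne'
      have : nextPrime n ≤ q := Nat.find_min' _ ⟨h1, hq⟩
      omega
  rw [List.find?_range_eq_some]
  refine ⟨by simpa [nextPrime] using hs, by simpa using hlt, fun j hj => ?_⟩
  have := Nat.find_min (Nat.exists_infinite_primes (n + 1)) hj
  have h2 : ¬ (n + 1 ≤ j ∧ j.Prime) := this
  simpa only [Bool.not_eq_true', decide_eq_false_iff_not] using h2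

theorem pr_nextPrime : Primrec nextPrime := by
  have h : Primrec fun n : ℕ => (List.range (2 * n + 3)).find?
      (fun k => decide (n + 1 ≤ k ∧ k.Prime)) := by
    refine pr_find (Primrec.list_range.comp (pr_add (pr_mul (Primrec.const 2) Primrec.id)
      (Primrec.const 3))) (R := fun n k => decide (n + 1 ≤ k ∧ k.Prime)) (pr_decide ?_)
    exact (Primrec.nat_le.comp (pr_add Primrec.fst (Primrec.const 1)) Primrec.snd).and
      (p_prime.comp Primrec.snd)
  refine (Primrec.option_getD.comp h (Primrec.const 0)).of_eq fun n => ?_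
  rw [nextPrime_find]; rfl

theorem pr_prm : Primrec prm := by
  refine (Primrec.nat_rec₁ 2 (f := fun _ y => nextPrime y)
    (pr_nextPrime.comp Primrec.snd)).of_eq fun n => ?_
  induction n with
  | zero => rfl
  | succ n ih => simp only [prm]; rw [← ih]

/-- Product of the first `n` primes. -/
def prodF (n : ℕ) : ℕ := ∏ i ∈ Finset.range n, prm i

theorem pr_prodF : Primrec prodF := by
  refine (Primrec.nat_rec₁ 1 (f := fun n y => y * prm n)
    (pr_mul Primrec.snd (pr_prm.comp Primrec.fst))).of_eq fun n => ?_
  induction n with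
  | zero => rfl
  | succ n ih =>
    simp only [prodF, Finset.prod_range_succ] at ih ⊢
    rw [← ih]

theorem pr_gcd {α : Type*} [Primcodable α] {f g : α → ℕ} (hf : Primrec f) (hg : Primrec g) :
    Primrec fun a => Nat.gcd (f a) (g a) := by
  have h : Primrec fun a => Nat.findGreatest (fun d => d ∣ f a ∧ d ∣ g a) (f a + g a) :=
    Primrec.nat_findGreatest (p := fun a d => d ∣ f a ∧ d ∣ g a) (pr_add hf hg)
      ((p_dvd Primrec.snd (hf.comp Primrec.fst)).and (p_dvd Primrec.snd (hg.comp Primrec.fst)))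
  refine h.of_eq fun a => ?_
  rw [Nat.findGreatest_eq_iff]
  refine ⟨?_, fun _ => ⟨Nat.gcd_dvd_left _ _, Nat.gcd_dvd_right _ _⟩, ?_⟩
  · rcases Nat.eq_zero_or_pos (f a) with h | h
    · simp [h]
    · exact (Nat.gcd_le_left _ h).trans (Nat.le_add_right _ _)
  · intro k hk hk2 ⟨h1, h2⟩
    have := Nat.dvd_gcd h1 h2
    rcases Nat.eq_zero_or_pos (Nat.gcd (f a) (g a)) with h | h
    · rw [Nat.gcd_eq_zero_iff] at h; omega
    · exact absurd (Nat.le_of_dvd h this) (by omega)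

/-- Transition table entries. -/
abbrev TEnt : Type := (ℕ × Bool × Bool) × (ℕ × Int × Int)

/-- Raw machine data. -/
abbrev RawM : Type := ℕ × List TEnt

def stepF (x : RawM) (q : ℕ) (b1 b2 : Bool) : Option (ℕ × Int × Int) :=
  (x.2.find? fun e => decide (e.1 = (q, b1, b2))).map Prod.snd

def stateF (m i : ℕ) : Option ℕ :=
  (List.range m).find? fun s => decide (prm s ∣ i)

/-- Numerator and denominator. -/
def numF (m s' : ℕ) (b1 b2 : Bool) (d1 d2 : ℤ) : ℕ := prm s' * prm (m + 2) *
  (if d1 = 1 then prm m else 1) * (if d2 = 1 then prm (m + 1) else 1)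
def denF (m s : ℕ) (b1 b2 : Bool) (d1 d2 : ℤ) : ℕ := prm s *
  (if b1 = true ∧ d1 = -1 then prm m else 1) * (if b2 = true ∧ d2 = -1 then prm (m + 1) else 1)

def qrF (x : RawM) (i : ℕ) : ℕ × ℕ :=
  Option.casesOn (motive := fun _ => ℕ × ℕ) (stateF x.1 i) (1, 1) fun s =>
    Option.casesOn (motive := fun _ => ℕ × ℕ)
      (stepF x s (decide (prm x.1 ∣ i)) (decide (prm (x.1 + 1) ∣ i))) (1, 1) fun t =>
      let num := numF x.1 t.1 (decide (prm x.1 ∣ i)) (decide (prm (x.1 + 1) ∣ i)) t.2.1 t.2.2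
      let den := denF x.1 s (decide (prm x.1 ∣ i)) (decide (prm (x.1 + 1) ∣ i)) t.2.1 t.2.2
      (num / Nat.gcd num den, den / Nat.gcd num den)

theorem max_zero_eq_one (d : ℤ) : (max d 0 = 1) = (d = 1) := by
  apply propext; omega
theorem max_zero_ne (d : ℤ) : (max d 0 = -1) = False := by
  refine eq_false fun h => ?_
  have := le_max_right d 0
  omega

theorem qr_eq (M : TCM) (i : ℕ) : M.qr i = qrF (M.m, M.δ) i := by
  have hs : M.stateOf i = stateF M.m i := rfl
  have ht : ∀ s b1 b2, M.step s b1 b2 = stepF (M.m, M.δ) s b1 b2 := fun _ _ _ => rfl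
  unfold TCM.qr qrF
  rw [hs]
  cases stateF M.m i with
  | none => rfl
  | some s =>
    simp only [ht]
    cases h : stepF (M.m, M.δ) s (decide (prm M.m ∣ i)) (decide (prm (M.m + 1) ∣ i)) with
    | none => rfl
    | some t =>
      obtain ⟨s', d1, d2⟩ := t
      by_cases h1 : prm M.m ∣ i <;> by_cases h2 : prm (M.m + 1) ∣ i <;>
        simp [numF, denF, h1, h2, max_zero_eq_one, max_zero_ne]

section PR2
variable {α : Type*} [Primcodable α]

theorem pr_stateF {m i : α → ℕ} (hm : Primrec m) (hi : Primrec i) :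
    Primrec fun a => stateF (m a) (i a) :=
  pr_find (Primrec.list_range.comp hm) (R := fun a s => decide (prm s ∣ i a))
    (pr_decide (p_dvd (pr_prm.comp Primrec.snd) (hi.comp Primrec.fst)))

theorem pr_stepF {x : α → RawM} {q : α → ℕ} {b1 b2 : α → Bool} (hx : Primrec x) (hq : Primrec q)
    (h1 : Primrec b1) (h2 : Primrec b2) :
    Primrec fun a => stepF (x a) (q a) (b1 a) (b2 a) := by
  refine Primrec.option_map (pr_find (Primrec.snd.comp hx)
    (R := fun a e => decide (e.1 = (q a, b1 a, b2 a))) (pr_decide ?_))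
    (Primrec.snd.comp Primrec.snd)
  exact p_eq (Primrec.fst.comp Primrec.snd)
    ((hq.comp Primrec.fst).pair ((h1.comp Primrec.fst).pair (h2.comp Primrec.fst)))

theorem pr_ite {c : α → Prop} {d : DecidablePred c} {f g : α → ℕ} (hc : PrimrecPred c)
    (hf : Primrec f) (hg : Primrec g) : Primrec fun a => @ite ℕ (c a) (d a) (f a) (g a) :=
  Primrec.ite hc hf hg

theorem pr_num {m s : α → ℕ} {b1 b2 : α → Bool} {d1 d2 : α → ℤ} (hm : Primrec m)
    (hs : Primrec s) (h1 : Primrec d1) (h2 : Primrec d2) :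
    Primrec fun a => numF (m a) (s a) (b1 a) (b2 a) (d1 a) (d2 a) :=
  pr_mul (pr_mul (pr_mul (pr_prm.comp hs) (pr_prm.comp (pr_add hm (Primrec.const 2))))
    (pr_ite (p_eq h1 (Primrec.const 1)) (pr_prm.comp hm) (Primrec.const 1)))
    (pr_ite (p_eq h2 (Primrec.const 1)) (pr_prm.comp (pr_add hm (Primrec.const 1)))
      (Primrec.const 1))

theorem pr_den {m s : α → ℕ} {b1 b2 : α → Bool} {d1 d2 : α → ℤ} (hm : Primrec m)
    (hs : Primrec s) (hb1 : Primrec b1) (hb2 : Primrec b2) (h1 : Primrec d1) (h2 : Primrec d2) :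
    Primrec fun a => denF (m a) (s a) (b1 a) (b2 a) (d1 a) (d2 a) :=
  pr_mul (pr_mul (pr_prm.comp hs)
    (pr_ite ((p_eq hb1 (Primrec.const true)).and (p_eq h1 (Primrec.const (-1)))) (pr_prm.comp hm)
      (Primrec.const 1)))
    (pr_ite ((p_eq hb2 (Primrec.const true)).and (p_eq h2 (Primrec.const (-1))))
      (pr_prm.comp (pr_add hm (Primrec.const 1))) (Primrec.const 1))

theorem pr_b {m i : α → ℕ} (hm : Primrec m) (hi : Primrec i) :
    Primrec fun a => decide (prm (m a) ∣ i a) :=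
  pr_decide (p_dvd (pr_prm.comp hm) hi)

theorem pr_qrF {x : α → RawM} {i : α → ℕ} (hx : Primrec x) (hi : Primrec i) :
    Primrec fun a => qrF (x a) (i a) := by
  have hm : Primrec fun a => (x a).1 := Primrec.fst.comp hx
  have hm1 : Primrec fun a => (x a).1 + 1 := pr_add hm (Primrec.const 1)
  have hb1 := pr_b hm hi
  have hb2 := pr_b hm1 hi
  refine Primrec.option_casesOn (pr_stateF hm hi) (Primrec.const (1, 1)) ?_
  have F : Primrec (Prod.fst : α × ℕ → α) := Primrec.fst
  refine Primrec.option_casesOn (α := α × ℕ)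
    (pr_stepF (hx.comp F) Primrec.snd (hb1.comp F) (hb2.comp F)) (Primrec.const (1, 1)) ?_
  have F2 : Primrec fun y : (α × ℕ) × (ℕ × ℤ × ℤ) => y.1.1 := Primrec.fst.comp Primrec.fst
  have hn : Primrec fun y : (α × ℕ) × (ℕ × ℤ × ℤ) => numF (x y.1.1).1 y.2.1
      (decide (prm (x y.1.1).1 ∣ i y.1.1)) (decide (prm ((x y.1.1).1 + 1) ∣ i y.1.1))
      y.2.2.1 y.2.2.2 :=
    pr_num (hm.comp F2) (Primrec.fst.comp Primrec.snd)
      (Primrec.fst.comp (Primrec.snd.comp Primrec.snd))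
      (Primrec.snd.comp (Primrec.snd.comp Primrec.snd))
  have hd : Primrec fun y : (α × ℕ) × (ℕ × ℤ × ℤ) => denF (x y.1.1).1 y.1.2
      (decide (prm (x y.1.1).1 ∣ i y.1.1)) (decide (prm ((x y.1.1).1 + 1) ∣ i y.1.1))
      y.2.2.1 y.2.2.2 :=
    pr_den (hm.comp F2) (Primrec.snd.comp Primrec.fst) (hb1.comp F2) (hb2.comp F2)
      (Primrec.fst.comp (Primrec.snd.comp Primrec.snd))
      (Primrec.snd.comp (Primrec.snd.comp Primrec.snd))
  exact (pr_div hn (pr_gcd hn hd)).pair (pr_div hd (pr_gcd hn hd))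

theorem pr_vt {n : α → ℕ} (hn : Primrec n) : Primrec fun a => vt (n a) :=
  Primrec.sumInr.comp (Primrec.sumInl.comp hn)

theorem pr_pathVar {a b base n j : α → ℕ} (ha : Primrec a) (hb : Primrec b) (hs : Primrec base)
    (hn : Primrec n) (hj : Primrec j) :
    Primrec fun x => pathVar (a x) (b x) (base x) (n x) (j x) :=
  Primrec.ite (p_eq hj (Primrec.const 0)) (pr_vt ha)
    (Primrec.ite (p_eq hj hn) (pr_vt hb) (pr_vt (pr_add hs hj)))

theorem pr_l1 {β : Type*} [Primcodable β] {f : α → β} (hf : Primrec f) :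
    Primrec fun a => [f a] := Primrec.list_cons.comp hf (Primrec.const [])
theorem pr_l2 {β : Type*} [Primcodable β] {f g : α → β} (hf : Primrec f) (hg : Primrec g) :
    Primrec fun a => [f a, g a] := Primrec.list_cons.comp hf (pr_l1 hg)
theorem pr_l3 {β : Type*} [Primcodable β] {f g h : α → β} (hf : Primrec f) (hg : Primrec g)
    (hh : Primrec h) :
    Primrec fun a => [f a, g a, h a] := Primrec.list_cons.comp hf (pr_l2 hg hh)

theorem pr_spathL {a b base n : α → ℕ} (ha : Primrec a) (hb : Primrec b) (hs : Primrec base)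
    (hn : Primrec n) : Primrec fun x => spathL (a x) (b x) (base x) (n x) := by
  refine Primrec.list_map (Primrec.list_range.comp hn) ?_
  have F : Primrec (Prod.fst : α × ℕ → α) := Primrec.fst
  refine Primrec.pair (Primrec.const pS) (pr_l2 ?_ ?_)
  · exact pr_pathVar (ha.comp F) (hb.comp F) (hs.comp F) (hn.comp F) Primrec.snd
  · exact pr_pathVar (ha.comp F) (hb.comp F) (hs.comp F) (hn.comp F)
      (pr_add Primrec.snd (Primrec.const 1))

theorem pr_pR {i : α → ℕ} (hi : Primrec i) : Primrec fun a => pR (i a) :=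
  pr_add (Primrec.const 5) (pr_mul (Primrec.const 2) hi)
theorem pr_pT {i : α → ℕ} (hi : Primrec i) : Primrec fun a => pT (i a) :=
  pr_add (Primrec.const 6) (pr_mul (Primrec.const 2) hi)

theorem pr_atom {P : α → ℕ} (hP : Primrec P) (l : List FTerm) :
    Primrec fun a => ((P a, l) : Atom) := hP.pair (Primrec.const l)

theorem pr_lR {p i : α → ℕ} (hp : Primrec p) (hi : Primrec i) :
    Primrec fun a => lR (p a) (i a) :=
  (pr_l2 (pr_atom (pr_pR hi) _) (Primrec.const _)).pair
    (pr_l1 (pr_atom (pr_pR (pr_mod (pr_add hi (Primrec.const 1)) hp)) _))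

theorem pr_lT {r q i : α → ℕ} (hr : Primrec r) (hq : Primrec q) (hi : Primrec i) :
    Primrec fun a => lT (r a) (q a) (i a) :=
  (Primrec.list_cons.comp (pr_atom (pr_pT hi) _) (Primrec.list_append.comp
    (pr_spathL (Primrec.const _) (Primrec.const _) (Primrec.const _) hr)
    (pr_spathL (Primrec.const _) (Primrec.const _) (pr_add (Primrec.const 11) hr) hq))).pair
    (pr_l1 (pr_atom (pr_pT hi) _))

theorem pr_lGS {i : α → ℕ} (hi : Primrec i) : Primrec fun a => lGS (i a) :=
  (pr_l3 (Primrec.const _) (pr_atom (pr_pR hi) _) (pr_atom (pr_pT hi) _)).pair (Primrec.const _)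

theorem pr_lFG {p : α → ℕ} (hp : Primrec p) : Primrec fun a => lFG (p a) :=
  (Primrec.const _).pair (Primrec.list_cons.comp (Primrec.const _)
    (Primrec.list_flatMap (Primrec.list_range.comp hp)
      (pr_l2 (pr_atom (pr_pR Primrec.snd) _) (pr_atom (pr_pT Primrec.snd) _))))

theorem pr_lEx {p : α → ℕ} (hp : Primrec p) : Primrec fun a => lEx (p a) :=
  (Primrec.const _).pair (Primrec.list_cons.comp (Primrec.const _)
    (Primrec.list_cons.comp (Primrec.const _)
      (Primrec.list_map (Primrec.list_range.comp hp) (pr_atom (pr_pT Primrec.snd) _))))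

theorem pr_rulesL {p : α → ℕ} {r q : α → ℕ → ℕ} (hp : Primrec p)
    (hr : Primrec fun x : α × ℕ => r x.1 x.2) (hq : Primrec fun x : α × ℕ => q x.1 x.2) :
    Primrec fun a => rulesL (p a) (r a) (q a) := by
  refine Primrec.list_cons.comp (Primrec.const _) (Primrec.list_cons.comp (Primrec.const _)
    (Primrec.list_cons.comp (Primrec.const _) (Primrec.list_cons.comp (Primrec.const _)
    (Primrec.list_cons.comp (pr_lFG hp) (Primrec.list_flatMap (Primrec.list_range.comp hp) ?_)))))
  exact pr_l3 (pr_lR (hp.comp Primrec.fst) Primrec.snd) (pr_lT hr hq Primrec.snd)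
    (pr_lGS Primrec.snd)

end PR2

/-! ### The decision procedure -/

/-- Raw inputs. -/
abbrev RawIn : Type := RawM × List Atom × List Atom

def kF (x : RawIn) : ℕ := Encodable.encode x.2.1 + Encodable.encode x.2.2 + 1

def pF (x : RawIn) : ℕ := prodF (x.1.1 + 3)

def decF (x : RawIn) : Prop :=
  DecN (kF x) (kF x * (kF x + 1)) (kF x * (kF x + 1) + kF x)
    (bigW (pF x) (kF x * (kF x + 1) + kF x))
    (rulesL (pF x) (fun i => (qrF x.1 i).2) (fun i => (qrF x.1 i).1)) (lEx (pF x)) x.2.1 x.2.2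

theorem p_decF : PrimrecPred decF := by
  have hI : Primrec fun x : RawIn => x.2.1 := Primrec.fst.comp Primrec.snd
  have hq : Primrec fun x : RawIn => x.2.2 := Primrec.snd.comp Primrec.snd
  have hK : Primrec kF := pr_add (pr_add (Primrec.encode.comp hI) (Primrec.encode.comp hq))
    (Primrec.const 1)
  have hp : Primrec pF := pr_prodF.comp
    (pr_add (Primrec.fst.comp Primrec.fst) (Primrec.const 3))
  have hb : Primrec fun x => kF x * (kF x + 1) := pr_mul hK (pr_add hK (Primrec.const 1))
  have hN : Primrec fun x => kF x * (kF x + 1) + kF x := pr_add hb hK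
  have hqr : Primrec fun y : RawIn × ℕ => qrF y.1.1 y.2 :=
    pr_qrF (Primrec.fst.comp Primrec.fst) Primrec.snd
  refine p_DecN hK hb hN ?_ (pr_rulesL hp (Primrec.snd.comp hqr) (Primrec.fst.comp hqr))
    (pr_lEx hp) hI hq
  exact pr_add (Primrec.encode.comp ((pr_add (Primrec.const 6)
    (pr_mul (Primrec.const 2) hp)).pair (pr_l3 hN hN hN))) (Primrec.const 1)

def decideF (n : ℕ) : Bool :=
  Option.casesOn (motive := fun _ => Bool) (Encodable.decode (α := RawIn) n) false
    fun x => decide (decF x)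

theorem pr_decideF : Primrec decideF :=
  Primrec.option_casesOn Primrec.decode (Primrec.const false)
    (pr_decide (p_decF.comp Primrec.snd))

theorem decode_finset (I : Finset Atom) : ∃ l : List Atom,
    Encodable.decode (α := List Atom) (Encodable.encode I) = some l ∧ ∀ a, a ∈ l ↔ a ∈ I := by
  have h : (Encodable.decode (Encodable.encode I.1) : Option (Multiset Atom)) = some I.1 :=
    Encodable.encodek I.1
  have h2 : (Encodable.decode (Encodable.encode I.1) : Option (Multiset Atom)) =
    (Encodable.decode (α := List Atom) (Encodable.encode I)).map Multiset.ofList :=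
    rfl
  rw [h2, Option.map_eq_some_iff] at h
  obtain ⟨l, h, hl⟩ := h
  refine ⟨l, h, fun a => ?_⟩
  rw [← Finset.mem_val, ← hl, Multiset.mem_coe]

theorem decode_input (M : TCM) (I q : Finset Atom) : ∃ lI lq : List Atom,
    Encodable.decode (α := RawIn) (Encodable.encode (encodeTCM M, I, q)) =
      some ((M.m, M.δ), lI, lq) ∧ (∀ a, a ∈ lI ↔ a ∈ I) ∧ ∀ a, a ∈ lq ↔ a ∈ q := by
  obtain ⟨lI, h1, h2⟩ := decode_finset I
  obtain ⟨lq, h3, h4⟩ := decode_finset q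
  refine ⟨lI, lq, ?_, h2, h4⟩
  have h5 : (Encodable.decode (encodeTCM M) : Option RawM) = some (M.m, M.δ) :=
    Encodable.encodek (M.m, M.δ)
  rw [Encodable.decode_prod_val]
  simp only [Encodable.encode_prod_val, Nat.unpair_pair]
  rw [show Encodable.encode (encodeTCM M) = encodeTCM M from rfl, h5]
  rw [Encodable.decode_prod_val]
  simp only [Nat.unpair_pair]
  rw [h1, h3]
  rfl

theorem decideF_correct (M : TCM) (I q : Finset Atom) (hsig : ∀ a ∈ I, InSig M a) :
    decideF (Encodable.encode (encodeTCM M, I, q)) = true ↔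
      Entails (RM M) (I : Set Atom) (q : Set Atom) := by
  obtain ⟨lI, lq, h, h1, h2⟩ := decode_input M I q
  unfold decideF
  rw [h]
  have hr : (fun i => (qrF (M.m, M.δ) i).2) = M.ri := by
    funext i; rw [← qr_eq]; rfl
  have hq : (fun i => (qrF (M.m, M.δ) i).1) = M.qi := by
    funext i; rw [← qr_eq]; rfl
  have hp : pF ((M.m, M.δ), lI, lq) = M.p := rfl
  simp only [decide_eq_true_eq]
  unfold decF
  simp only [hr, hq, hp]
  refine dec_correct (by simp [kF]) hsig h1 h2 ?_ ?_
  · intro a ha t ht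
    have := enc_term_le ((h1 a).2 ha) ht
    simp only [kF]; omega
  · intro a ha t ht
    have := enc_term_le ((h2 a).2 ha) ht
    simp only [kF]; omega

/-- BCQ entailment is decidable for the class `C = {R_M}`. -/
theorem stmt_12 :
    ∃ f : ℕ → Bool, Computable f ∧
      ∀ (M : TCM) (I q : Finset Atom), (∀ a ∈ I, InSig M a) →
        (f (Encodable.encode (encodeTCM M, I, q)) = true ↔
          Entails (RM M) (I : Set Atom) (q : Set Atom)) :=
  ⟨decideF, pr_decideF.to_comp, fun M I q h => decideF_correct M I q h⟩

end
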